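/- arXiv:2402.06765 — 2 statements merged into one kernel-verified Lean document; each statement's English description precedes it below -/
import Mathlib

section
/- Suppose the environment is ordered, and for each θ̄ ∈ { min supp μ0, max supp μ0 }, either μ0({θ̄}) = 0 or A*_R(δ_{θ̄}) is a singleton (where δ_{θ̄} is the point mass at θ̄). Then ŵ(μ0) = v̂(μ0), i.e., the sender has a unique equilibrium payoff. -/
open MeasureTheory


/-- The Borel σ-algebra on the space of probability measures (the σ-algebra generated by
evaluation maps, i.e. the subspace σ-algebra of the Giry σ-algebra; for metrizable spaces
this is the Borel σ-algebra of the weak* topology). -/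
instance probMeasurableSpace {Ω : Type*} [MeasurableSpace Ω] :
    MeasurableSpace (ProbabilityMeasure Ω) :=
  MeasurableSpace.comap (fun μ => (μ : Measure Ω)) inferInstance

/-- Sender's expected utility from action `a` at belief `μ`. -/
noncomputable def senderEU {A Θ : Type*} [MeasurableSpace Θ]
    (uS : A → Θ → ℝ) (μ : ProbabilityMeasure Θ) (a : A) : ℝ :=
  ∫ θ, uS a θ ∂(μ : Measure Θ)

/-- The receiver's best responses `A*_R(μ)` at belief `μ`. -/
def bestResponses {A Θ : Type*} [MeasurableSpace Θ]
    (uR : A → Θ → ℝ) (μ : ProbabilityMeasure Θ) : Set A :=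
  {a | ∀ a' : A, ∫ θ, uR a' θ ∂(μ : Measure Θ) ≤ ∫ θ, uR a θ ∂(μ : Measure Θ)}

/-- The sender's upper value function `v`. -/
noncomputable def vFun {A Θ : Type*} [MeasurableSpace Θ]
    (uS uR : A → Θ → ℝ) (μ : ProbabilityMeasure Θ) : ℝ :=
  sSup (senderEU uS μ '' bestResponses uR μ)

/-- The sender's lower value function `w`. -/
noncomputable def wFun {A Θ : Type*} [MeasurableSpace Θ]
    (uS uR : A → Θ → ℝ) (μ : ProbabilityMeasure Θ) : ℝ :=
  sInf (senderEU uS μ '' bestResponses uR μ)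

/-- The set `I(μ0)` of information policies: distributions over posteriors with
barycenter equal to the prior `μ0`. -/
def infoPolicies {Θ : Type*} [MeasurableSpace Θ] (μ0 : ProbabilityMeasure Θ) :
    Set (ProbabilityMeasure (ProbabilityMeasure Θ)) :=
  {p | ∀ B : Set Θ, MeasurableSet B →
    ∫ ν, ((ν : Measure Θ) B).toReal ∂(p : Measure (ProbabilityMeasure Θ))
      = ((μ0 : Measure Θ) B).toReal}

/-- `v̂(μ0)`: the sender's best equilibrium (Bayesian persuasion) value. -/
noncomputable def vHat {A Θ : Type*} [MeasurableSpace Θ]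
    (uS uR : A → Θ → ℝ) (μ0 : ProbabilityMeasure Θ) : ℝ :=
  sSup ((fun p : ProbabilityMeasure (ProbabilityMeasure Θ) =>
    ∫ ν, vFun uS uR ν ∂(p : Measure (ProbabilityMeasure Θ))) '' infoPolicies μ0)

/-- `ŵ(μ0)`: the sender's worst equilibrium value. -/
noncomputable def wHat {A Θ : Type*} [MeasurableSpace Θ]
    (uS uR : A → Θ → ℝ) (μ0 : ProbabilityMeasure Θ) : ℝ :=
  sSup ((fun p : ProbabilityMeasure (ProbabilityMeasure Θ) =>
    ∫ ν, wFun uS uR ν ∂(p : Measure (ProbabilityMeasure Θ))) '' infoPolicies μ0)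

/-- The (topological) support of a probability measure. -/
def msupport {Θ : Type*} [MeasurableSpace Θ] [TopologicalSpace Θ]
    (μ : ProbabilityMeasure Θ) : Set Θ :=
  {θ | ∀ U : Set Θ, IsOpen U → θ ∈ U → (μ : Measure Θ) U ≠ 0}

/-- The point mass at `x` as a probability measure. -/
noncomputable def diracPM {X : Type*} [MeasurableSpace X] (x : X) : ProbabilityMeasure X :=
  ⟨MeasureTheory.Measure.dirac x, MeasureTheory.Measure.dirac.isProbabilityMeasure⟩

/-!
Only `v̂ ≤ ŵ` is at stake. Given an information policy, perturb each posterior `ν` by replacing,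
with small weight, a state drawn from `ν` by its maximum (or minimum) with an independent draw from
the prior `μ0`. The perturbed posterior is at most `ν + ε • μ0`, so the perturbed policy becomes
feasible after mixing in one further posterior of weight `O(ε)`. By strictly increasing differences
no action below the greatest best response at `ν` is optimal at the upward perturbation, so as
`ε → 0` the sender's worst payoff there is asymptotically at least the payoff of that greatest
action; downward perturbations give the least best response. The quasiconcavity-or-quasiconvexity
assumption bounds `v ν` by the larger of these two payoffs. The perturbation fails to move `ν` only
if `ν` is the point mass at an endpoint of the support of `μ0`, which is where the boundary
condition enters.
-/

open Filter Set Topology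
open scoped NNReal ENNReal

section Mixture

variable {X Y : Type*} [MeasurableSpace X] [MeasurableSpace Y]

/-- The mixture of `P` and `Q` with weights proportional to `1` and `ε`. -/
noncomputable def mix (ε : ℝ≥0) (P Q : ProbabilityMeasure X) : ProbabilityMeasure X :=
  ⟨(1 + ε)⁻¹ • ((P : Measure X) + ε • (Q : Measure X)), ⟨by
    rw [Measure.smul_apply, Measure.add_apply, Measure.smul_apply, measure_univ, measure_univ,
      ENNReal.smul_def, ENNReal.smul_def, smul_eq_mul, smul_eq_mul, mul_one]
    exact_mod_cast inv_mul_cancel₀ (by positivity : 1 + ε ≠ 0)⟩⟩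

lemma toMeasure_mix (ε : ℝ≥0) (P Q : ProbabilityMeasure X) :
    (mix ε P Q : Measure X) = (1 + ε)⁻¹ • ((P : Measure X) + ε • (Q : Measure X)) := rfl

lemma measurable_mix {P Q : Y → ProbabilityMeasure X} (ε : ℝ≥0) (hP : Measurable P)
    (hQ : Measurable Q) : Measurable fun y => mix ε (P y) (Q y) := by
  refine Measurable.subtype_mk (Measure.measurable_of_measurable_coe _ fun s hs => ?_)
  have heval {R : Y → ProbabilityMeasure X} (hR : Measurable R) :
      Measurable fun y => (R y : Measure X) s :=
    (Measure.measurable_coe hs).comp (measurable_subtype_coe.comp hR)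
  simp only [Measure.smul_apply, Measure.add_apply]
  exact ((heval hP).add ((heval hQ).const_smul ε)).const_smul _

lemma integral_mix {P Q : ProbabilityMeasure X} {f : X → ℝ} (ε : ℝ≥0)
    (hP : Integrable f (P : Measure X)) (hQ : Integrable f (Q : Measure X)) :
    ∫ x, f x ∂(mix ε P Q : Measure X) =
      (1 + ε : ℝ)⁻¹ * (∫ x, f x ∂(P : Measure X) + ε * ∫ x, f x ∂(Q : Measure X)) := by
  rw [toMeasure_mix, integral_smul_nnreal_measure,
    integral_add_measure hP (hQ.smul_measure_nnreal), integral_smul_nnreal_measure]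
  simp only [NNReal.smul_def, NNReal.coe_inv, NNReal.coe_add, NNReal.coe_one, smul_eq_mul]

lemma bind_mix {κ : X → Measure Y} (hκ : Measurable κ) (ε : ℝ≥0) (P Q : ProbabilityMeasure X) :
    (mix ε P Q : Measure X).bind κ =
      (1 + ε)⁻¹ • ((P : Measure X).bind κ + ε • (Q : Measure X).bind κ) := by
  ext s hs
  simp only [toMeasure_mix, Measure.smul_apply, Measure.add_apply,
    Measure.bind_apply hs hκ.aemeasurable, lintegral_smul_measure, lintegral_add_measure]

lemma exists_mix_eq {ε : ℝ≥0} (hε : ε ≠ 0) {P R : ProbabilityMeasure X}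
    (h : (P : Measure X) ≤ (1 + ε) • (R : Measure X)) : ∃ Q, mix ε P Q = R := by
  set D : Measure X := (1 + ε) • (R : Measure X) - P
  have hadd : (P : Measure X) + D = (1 + ε) • (R : Measure X) := by
    rw [add_comm]
    exact Measure.sub_add_cancel_of_le h
  have hmass : D Set.univ = ε := by
    have := congrArg (· Set.univ) hadd
    simp only [Measure.add_apply, Measure.smul_apply, measure_univ, ENNReal.smul_def, smul_eq_mul,
      mul_one, ENNReal.coe_add, ENNReal.coe_one] at this
    exact (ENNReal.add_right_inj ENNReal.one_ne_top).1 this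
  refine ⟨⟨ε⁻¹ • D, ⟨?_⟩⟩, Subtype.ext ?_⟩
  · rw [Measure.smul_apply, hmass, ENNReal.smul_def, smul_eq_mul]
    exact_mod_cast inv_mul_cancel₀ hε
  · change (1 + ε)⁻¹ • ((P : Measure X) + ε • ε⁻¹ • D) = R
    rw [smul_inv_smul₀ hε, hadd, inv_smul_smul₀ (by positivity)]

lemma tendsto_mix [TopologicalSpace X] [OpensMeasurableSpace X] (P Q : ProbabilityMeasure X) :
    Tendsto (fun ε => mix ε P Q) (𝓝 0) (𝓝 P) := by
  refine ProbabilityMeasure.tendsto_iff_forall_integral_tendsto.2 fun f => ?_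
  simp_rw [fun ε => integral_mix ε (f.integrable (P : Measure X)) (f.integrable (Q : Measure X))]
  have hcont : Continuous fun ε : ℝ≥0 => (1 + ε : ℝ)⁻¹ *
      (∫ x, f x ∂(P : Measure X) + ε * ∫ x, f x ∂(Q : Measure X)) := by
    fun_prop (disch := intro; positivity)
  simpa using hcont.tendsto 0

end Mixture

section InformationPolicy

variable {Θ : Type*} [MeasurableSpace Θ]

lemma measurable_toMeasure :
    Measurable (ProbabilityMeasure.toMeasure : ProbabilityMeasure Θ → Measure Θ) :=
  comap_measurable _

lemma mem_infoPolicies_iff {μ0 : ProbabilityMeasure Θ}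
    {p : ProbabilityMeasure (ProbabilityMeasure Θ)} :
    p ∈ infoPolicies μ0 ↔
      (p : Measure (ProbabilityMeasure Θ)).bind ProbabilityMeasure.toMeasure = μ0 := by
  rw [Measure.ext_iff]
  refine forall₂_congr fun B hB => ?_
  have hmeas : Measurable fun ν : ProbabilityMeasure Θ => (ν : Measure Θ) B :=
    (Measure.measurable_coe hB).comp measurable_toMeasure
  have hle : ∫⁻ ν, (ν : Measure Θ) B ∂(p : Measure (ProbabilityMeasure Θ)) ≤ 1 :=
    (lintegral_mono fun ν => prob_le_one).trans_eq (by simp)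
  rw [Measure.bind_apply hB measurable_toMeasure.aemeasurable,
    integral_toReal hmeas.aemeasurable (ae_of_all _ fun ν => measure_lt_top _ B),
    ENNReal.toReal_eq_toReal_iff' (ne_top_of_le_ne_top ENNReal.one_ne_top hle)
      (measure_ne_top _ B)]

lemma diracPM_mem_infoPolicies (μ0 : ProbabilityMeasure Θ) : diracPM μ0 ∈ infoPolicies μ0 :=
  mem_infoPolicies_iff.2 (Measure.dirac_bind measurable_toMeasure μ0)

lemma ae_ae_of_mem_infoPolicies {μ0 : ProbabilityMeasure Θ}
    {p : ProbabilityMeasure (ProbabilityMeasure Θ)} (hp : p ∈ infoPolicies μ0) {P : Θ → Prop}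
    (hP : ∀ᵐ θ ∂(μ0 : Measure Θ), P θ) :
    ∀ᵐ (ν : ProbabilityMeasure Θ) ∂(p : Measure (ProbabilityMeasure Θ)),
      ∀ᵐ θ ∂(ν : Measure Θ), P θ := by
  rw [← mem_infoPolicies_iff.1 hp] at hP
  exact Measure.ae_ae_of_ae_bind measurable_toMeasure.aemeasurable hP

lemma bind_le_of_mem_infoPolicies {μ0 : ProbabilityMeasure Θ}
    {p : ProbabilityMeasure (ProbabilityMeasure Θ)} (hp : p ∈ infoPolicies μ0) {ε : ℝ≥0}
    {T : ProbabilityMeasure Θ → ProbabilityMeasure Θ} (hT : Measurable T)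
    (hle : ∀ ν, (T ν : Measure Θ) ≤ ν + ε • (μ0 : Measure Θ)) :
    (p : Measure (ProbabilityMeasure Θ)).bind (fun ν => (T ν : Measure Θ)) ≤
      (1 + ε) • (μ0 : Measure Θ) := by
  have hTm : Measurable fun ν => (T ν : Measure Θ) := measurable_toMeasure.comp hT
  refine Measure.le_intro fun B hB _ => ?_
  rw [Measure.bind_apply hB hTm.aemeasurable]
  calc ∫⁻ ν, (T ν : Measure Θ) B ∂(p : Measure (ProbabilityMeasure Θ))
      ≤ ∫⁻ ν, ((ν : Measure Θ) B + ε • (μ0 : Measure Θ) B)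
          ∂(p : Measure (ProbabilityMeasure Θ)) := lintegral_mono fun ν => hle ν B
    _ = (p : Measure (ProbabilityMeasure Θ)).bind ProbabilityMeasure.toMeasure B +
          ε • (μ0 : Measure Θ) B := by
      rw [lintegral_add_right _ measurable_const, lintegral_const, measure_univ, mul_one,
        Measure.bind_apply hB measurable_toMeasure.aemeasurable]
    _ = ((1 + ε) • (μ0 : Measure Θ)) B := by
      rw [mem_infoPolicies_iff.1 hp, Measure.smul_apply, add_smul, one_smul]

lemma exists_mix_mem_infoPolicies {μ0 : ProbabilityMeasure Θ}
    {p : ProbabilityMeasure (ProbabilityMeasure Θ)} (hp : p ∈ infoPolicies μ0) {ε : ℝ≥0}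
    (hε : ε ≠ 0) {T : ProbabilityMeasure Θ → ProbabilityMeasure Θ} (hT : Measurable T)
    (hle : ∀ ν, (T ν : Measure Θ) ≤ ν + ε • (μ0 : Measure Θ)) :
    ∃ ρ, mix ε (p.map hT.aemeasurable) (diracPM ρ) ∈ infoPolicies μ0 := by
  have hTm : Measurable fun ν => (T ν : Measure Θ) := measurable_toMeasure.comp hT
  obtain ⟨ρ, hρ⟩ := exists_mix_eq hε
    (P := ⟨_, isProbabilityMeasure_bind hTm.aemeasurable (ae_of_all _ fun ν => inferInstance)⟩)
    (bind_le_of_mem_infoPolicies hp hT hle)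
  have hT_bind : (p.map hT.aemeasurable : Measure (ProbabilityMeasure Θ)).bind
      ProbabilityMeasure.toMeasure =
        (p : Measure (ProbabilityMeasure Θ)).bind fun ν => (T ν : Measure Θ) := by
    rw [ProbabilityMeasure.toMeasure_map, Measure.bind, Measure.map_map measurable_toMeasure hT]
    rfl
  have hρ_bind : (diracPM ρ : Measure (ProbabilityMeasure Θ)).bind
      ProbabilityMeasure.toMeasure = ρ := Measure.dirac_bind measurable_toMeasure ρ
  refine ⟨ρ, mem_infoPolicies_iff.2 ?_⟩
  rw [bind_mix measurable_toMeasure, hT_bind, hρ_bind]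
  exact congrArg ProbabilityMeasure.toMeasure hρ

end InformationPolicy

section Measure

variable {X Y ι : Type*} [MeasurableSpace X] [MeasurableSpace Y]

lemma exists_measurable_comp_eq_max {α : Type*} [LinearOrder α] [TopologicalSpace α]
    [OrderClosedTopology α] [SecondCountableTopology α] [MeasurableSpace α]
    [OpensMeasurableSpace α] {f : Y → α} (hf : Measurable f) {S T : X → Y} (hS : Measurable S)
    (hT : Measurable T) :
    ∃ R : X → Y, Measurable R ∧ (∀ x, R x = S x ∨ R x = T x) ∧
      ∀ x, f (R x) = max (f (S x)) (f (T x)) := by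
  classical
  refine ⟨{x | f (T x) ≤ f (S x)}.piecewise S T,
    hS.piecewise (measurableSet_le (hf.comp hT) (hf.comp hS)) hT, fun x => ?_, fun x => ?_⟩ <;>
  by_cases hx : f (T x) ≤ f (S x)
  · simp [hx]
  · simp [hx]
  · simp [hx]
  · simp [hx, (not_le.1 hx).le]

lemma tendsto_integral_min {l : Filter ι} [l.IsCountablyGenerated] {μ : Measure X}
    [IsFiniteMeasure μ] {F : ι → X → ℝ} {g : X → ℝ} {M : ℝ}
    (hF : ∀ i, AEStronglyMeasurable (F i) μ) (hg : AEStronglyMeasurable g μ)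
    (hFM : ∀ i x, |F i x| ≤ M) (hgM : ∀ x, |g x| ≤ M)
    (h : ∀ᵐ x ∂μ, ∀ c < g x, ∀ᶠ i in l, c < F i x) :
    Tendsto (fun i => ∫ x, min (F i x) (g x) ∂μ) l (𝓝 (∫ x, g x ∂μ)) := by
  refine tendsto_integral_filter_of_dominated_convergence (fun _ => M)
    (.of_forall fun i => (hF i).inf hg) (.of_forall fun i => ae_of_all _ fun x => ?_)
    (integrable_const M) ?_
  · exact abs_min_le_max_abs_abs.trans (max_le (hFM i x) (hgM x))
  · filter_upwards [h] with x hx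
    exact tendsto_order.2 ⟨fun c hc => (hx c hc).mono fun i hi => lt_min hi hc,
      fun c hc => .of_forall fun i => min_lt_of_right_lt hc⟩

lemma abs_integral_le_of_abs_le {μ : Measure X} [IsProbabilityMeasure μ] {f : X → ℝ} {M : ℝ}
    (hf : ∀ x, |f x| ≤ M) : |∫ x, f x ∂μ| ≤ M := by
  simpa using norm_integral_le_of_norm_le_const (f := f) (ae_of_all μ hf)

end Measure

section PersuasionValue

variable {Θ : Type*} [MeasurableSpace Θ] {μ0 : ProbabilityMeasure Θ}
  {p : ProbabilityMeasure (ProbabilityMeasure Θ)} {f g : ProbabilityMeasure Θ → ℝ} {M : ℝ}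

/-- The value of the persuasion problem at prior `μ0` whose payoff at posterior `ν` is `f ν`, so
that `vHat` and `wHat` are the cases `f = vFun uS uR` and `f = wFun uS uR`. -/
noncomputable def persuasionValue (f : ProbabilityMeasure Θ → ℝ) (μ0 : ProbabilityMeasure Θ) : ℝ :=
  sSup ((fun p : ProbabilityMeasure (ProbabilityMeasure Θ) =>
    ∫ ν, f ν ∂(p : Measure (ProbabilityMeasure Θ))) '' infoPolicies μ0)

lemma integral_le_persuasionValue (hfM : ∀ ν, |f ν| ≤ M) (hp : p ∈ infoPolicies μ0) :
    ∫ ν, f ν ∂(p : Measure (ProbabilityMeasure Θ)) ≤ persuasionValue f μ0 := by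
  refine le_csSup ⟨M, ?_⟩ (mem_image_of_mem _ hp)
  rintro _ ⟨q, -, rfl⟩
  exact (abs_le.1 (abs_integral_le_of_abs_le hfM)).2

lemma persuasionValue_le {B : ℝ}
    (h : ∀ p ∈ infoPolicies μ0, ∫ ν, f ν ∂(p : Measure (ProbabilityMeasure Θ)) ≤ B) :
    persuasionValue f μ0 ≤ B :=
  csSup_le (Nonempty.image _ ⟨_, diracPM_mem_infoPolicies μ0⟩) (forall_mem_image.2 h)

lemma persuasionValue_mono (hf : Measurable f) (hg : Measurable g) (hfM : ∀ ν, |f ν| ≤ M)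
    (hgM : ∀ ν, |g ν| ≤ M) (hfg : ∀ ν, f ν ≤ g ν) :
    persuasionValue f μ0 ≤ persuasionValue g μ0 :=
  persuasionValue_le fun _ hp =>
    (integral_mono (.of_bound hf.aestronglyMeasurable M (ae_of_all _ hfM))
      (.of_bound hg.aestronglyMeasurable M (ae_of_all _ hgM)) hfg).trans
        (integral_le_persuasionValue hgM hp)

lemma integral_comp_le_persuasionValue (hf : Measurable f) (hfM : ∀ ν, |f ν| ≤ M)
    (hp : p ∈ infoPolicies μ0) {ε : ℝ≥0} (hε : ε ≠ 0)
    {T : ProbabilityMeasure Θ → ProbabilityMeasure Θ} (hT : Measurable T)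
    (hle : ∀ ν, (T ν : Measure Θ) ≤ ν + ε • (μ0 : Measure Θ)) :
    ∫ ν, f (T ν) ∂(p : Measure (ProbabilityMeasure Θ)) ≤
      (1 + ε) * persuasionValue f μ0 + ε * M := by
  obtain ⟨ρ, hq⟩ := exists_mix_mem_infoPolicies hp hε hT hle
  have hint (q : ProbabilityMeasure (ProbabilityMeasure Θ)) :
      Integrable f (q : Measure (ProbabilityMeasure Θ)) :=
    .of_bound hf.aestronglyMeasurable M (ae_of_all _ hfM)
  have hmap : ∫ ν, f ν ∂(p.map hT.aemeasurable : Measure (ProbabilityMeasure Θ)) =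
      ∫ ν, f (T ν) ∂(p : Measure (ProbabilityMeasure Θ)) :=
    integral_map hT.aemeasurable hf.aestronglyMeasurable
  have hρ : ∫ ν, f ν ∂(diracPM ρ : Measure (ProbabilityMeasure Θ)) = f ρ :=
    integral_dirac' f ρ hf.stronglyMeasurable
  have hvalue := integral_le_persuasionValue hfM hq
  rw [integral_mix ε (hint _) (hint _), hmap, hρ, inv_mul_le_iff₀ (by positivity)] at hvalue
  nlinarith [neg_le_of_abs_le (hfM ρ), ε.coe_nonneg]

theorem persuasionValue_le_of_perturbation (hf : Measurable f) (hg : Measurable g)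
    (hfM : ∀ ν, |f ν| ≤ M) (hgM : ∀ ν, |g ν| ≤ M)
    {T : ℝ≥0 → ProbabilityMeasure Θ → ProbabilityMeasure Θ} (hT : ∀ ε, Measurable (T ε))
    (hle : ∀ ε ν, (T ε ν : Measure Θ) ≤ ν + ε • (μ0 : Measure Θ))
    (hlim : ∀ p ∈ infoPolicies μ0, ∀ᵐ (ν : ProbabilityMeasure Θ) ∂p.toMeasure,
      ∀ c < g ν, ∀ᶠ ε in 𝓝[>] 0, c < f (T ε ν)) :
    persuasionValue g μ0 ≤ persuasionValue f μ0 := by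
  refine persuasionValue_le fun p hp => ?_
  have hfT (ε : ℝ≥0) : Measurable fun ν => f (T ε ν) := hf.comp (hT ε)
  have hmin := tendsto_integral_min (fun ε => (hfT ε).aestronglyMeasurable)
    hg.aestronglyMeasurable (fun ε ν => hfM (T ε ν)) hgM (hlim p hp)
  have hbound : Tendsto (fun ε : ℝ≥0 => (1 + ε : ℝ) * persuasionValue f μ0 + ε * M) (𝓝[>] 0)
      (𝓝 (persuasionValue f μ0)) := by
    have hcont : Continuous fun ε : ℝ≥0 => (1 + ε : ℝ) * persuasionValue f μ0 + ε * M := by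
      fun_prop
    simpa using (hcont.tendsto 0).mono_left nhdsWithin_le_nhds
  refine le_of_tendsto_of_tendsto hmin hbound (eventually_mem_nhdsWithin.mono fun ε hε => ?_)
  have hle_integral : ∫ ν, min (f (T ε ν)) (g ν) ∂(p : Measure (ProbabilityMeasure Θ)) ≤
      ∫ ν, f (T ε ν) ∂(p : Measure (ProbabilityMeasure Θ)) := by
    have hint : Integrable (fun ν => f (T ε ν)) (p : Measure (ProbabilityMeasure Θ)) :=
      .of_bound (hfT ε).aestronglyMeasurable M (ae_of_all _ fun ν => hfM _)
    have hint' : Integrable g (p : Measure (ProbabilityMeasure Θ)) :=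
      .of_bound hg.aestronglyMeasurable M (ae_of_all _ hgM)
    exact integral_mono (hint.inf hint') hint fun ν => min_le_left _ _
  exact hle_integral.trans
    (integral_comp_le_persuasionValue hf hfM hp (ne_of_gt hε) (hT ε) (hle ε))

end PersuasionValue

section Beliefs

variable {Θ : Type*} [MeasurableSpace Θ]

lemma measurable_integral_toMeasure {f : Θ → ℝ} (hf : Measurable f) :
    Measurable fun μ : ProbabilityMeasure Θ => ∫ θ, f θ ∂(μ : Measure Θ) := by
  let κ : ProbabilityTheory.Kernel (ProbabilityMeasure Θ) Θ :=
    ⟨ProbabilityMeasure.toMeasure, measurable_toMeasure⟩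
  exact (hf.stronglyMeasurable.integral_kernel (κ := κ)).measurable

lemma exists_eq_diracPM_of_ae_mem {S : Set Θ} (hS : S.Subsingleton) {ν : ProbabilityMeasure Θ}
    (hν : ∀ᵐ θ ∂(ν : Measure Θ), θ ∈ S) : ∃ θ ∈ S, ν = diracPM θ := by
  obtain ⟨θ, hθ⟩ := hν.exists
  have hconst : id =ᵐ[(ν : Measure Θ)] fun _ => θ := hν.mono fun x hx => hS hx hθ
  refine ⟨θ, hθ, Subtype.ext ?_⟩
  change (ν : Measure Θ) = Measure.dirac θ
  rw [← Measure.map_id (μ := (ν : Measure Θ)), Measure.map_congr hconst, Measure.map_const,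
    measure_univ, one_smul]

variable [TopologicalSpace Θ]

lemma msupport_eq_support (μ : ProbabilityMeasure Θ) :
    msupport μ = (μ : Measure Θ).support := by
  ext θ
  rw [Measure.mem_support_iff_forall]
  refine ⟨fun h U hU => ?_, fun h U hU hθ => (h U (hU.mem_nhds hθ)).ne'⟩
  obtain ⟨V, hVU, hV, hθV⟩ := mem_nhds_iff.1 hU
  exact (pos_iff_ne_zero.2 (h V hV hθV)).trans_le (measure_mono hVU)

variable [CompactSpace Θ] [OpensMeasurableSpace Θ]

lemma integrable_continuousMap (f : C(Θ, ℝ)) (μ : ProbabilityMeasure Θ) :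
    Integrable f (μ : Measure Θ) :=
  (BoundedContinuousFunction.mkOfCompact f).integrable (μ : Measure Θ)

lemma continuous_integral_prod :
    Continuous fun p : C(Θ, ℝ) × ProbabilityMeasure Θ => ∫ θ, p.1 θ ∂(p.2 : Measure Θ) := by
  refine continuous_prod_of_continuous_lipschitzWith _ 1
    (fun f => ProbabilityMeasure.continuous_integral_continuousMap f) fun μ =>
      LipschitzWith.of_dist_le_mul fun f g => ?_
  rw [NNReal.coe_one, one_mul, Real.dist_eq,
    ← integral_sub (integrable_continuousMap f μ) (integrable_continuousMap g μ)]
  exact abs_integral_le_of_abs_le fun θ =>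
    (Real.dist_eq _ _).symm.trans_le (ContinuousMap.dist_apply_le_dist θ)

lemma eq_generateFrom_integral :
    (inferInstance : TopologicalSpace (ProbabilityMeasure Θ)) = .generateFrom
      {V | ∃ f : C(Θ, ℝ), ∃ U, IsOpen U ∧
        (fun μ : ProbabilityMeasure Θ => ∫ θ, f θ ∂(μ : Measure Θ)) ⁻¹' U = V} := by
  refine le_antisymm (le_generateFrom ?_) (continuous_id_iff_le.1 ?_)
  · rintro _ ⟨f, U, hU, rfl⟩
    exact hU.preimage (ProbabilityMeasure.continuous_integral_continuousMap f)
  · let := TopologicalSpace.generateFrom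
      {V | ∃ f : C(Θ, ℝ), ∃ U, IsOpen U ∧
        (fun μ : ProbabilityMeasure Θ => ∫ θ, f θ ∂(μ : Measure Θ)) ⁻¹' U = V}
    exact ProbabilityMeasure.continuous_iff_forall_continuousMap_continuous_integral.2 fun f =>
      ⟨fun U hU => TopologicalSpace.isOpen_generateFrom_of_mem ⟨f, U, hU, rfl⟩⟩

end Beliefs

section BestResponses

variable {A Θ : Type*} [MeasurableSpace Θ] {uS uR : A → Θ → ℝ}

lemma vFun_eq_neg_wFun_neg (μ : ProbabilityMeasure Θ) :
    vFun uS uR μ = -wFun (fun a θ => -uS a θ) uR μ := by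
  have hneg : senderEU (fun a θ => -uS a θ) μ = fun a => -senderEU uS μ a :=
    funext fun a => integral_neg _
  rw [wFun, vFun, hneg, ← Real.sSup_neg, ← image_neg_eq_neg, image_image]
  simp only [neg_neg]

variable [TopologicalSpace A] [TopologicalSpace Θ] [CompactSpace Θ]

lemma exists_abs_senderEU_le [CompactSpace A]
    (hS : Continuous fun p : A × Θ => uS p.1 p.2) :
    ∃ M, ∀ μ a, |senderEU uS μ a| ≤ M := by
  obtain ⟨M, hM⟩ := isCompact_univ.exists_bound_of_continuousOn hS.continuousOn
  exact ⟨M, fun μ a => abs_integral_le_of_abs_le fun θ => hM (a, θ) (mem_univ _)⟩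

variable [OpensMeasurableSpace Θ]

lemma continuous_senderEU (hS : Continuous fun p : A × Θ => uS p.1 p.2) :
    Continuous fun p : ProbabilityMeasure Θ × A => senderEU uS p.1 p.2 := by
  let payoff : C(A, C(Θ, ℝ)) := ContinuousMap.curry ⟨fun p : A × Θ => uS p.1 p.2, hS⟩
  exact continuous_integral_prod.comp
    ((payoff.continuous.comp continuous_snd).prodMk continuous_fst)

lemma isClosed_bestResponses_graph (hR : Continuous fun p : A × Θ => uR p.1 p.2) :
    IsClosed {p : ProbabilityMeasure Θ × A | p.2 ∈ bestResponses uR p.1} := by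
  have hEU := continuous_senderEU hR
  have hgraph : {p : ProbabilityMeasure Θ × A | p.2 ∈ bestResponses uR p.1} =
      ⋂ a, {p | senderEU uR p.1 a ≤ senderEU uR p.1 p.2} := by
    ext p
    rw [mem_iInter]
    rfl
  rw [hgraph]
  exact isClosed_iInter fun a => isClosed_le
    (hEU.comp (continuous_fst.prodMk continuous_const)) hEU

variable [CompactSpace A]

lemma isCompact_bestResponses (hR : Continuous fun p : A × Θ => uR p.1 p.2)
    (μ : ProbabilityMeasure Θ) : IsCompact (bestResponses uR μ) :=
  ((isClosed_bestResponses_graph hR).preimage (Continuous.prodMk_right μ)).isCompact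

lemma isCompact_senderEU_image (hS : Continuous fun p : A × Θ => uS p.1 p.2)
    (hR : Continuous fun p : A × Θ => uR p.1 p.2) (μ : ProbabilityMeasure Θ) :
    IsCompact (senderEU uS μ '' bestResponses uR μ) :=
  (isCompact_bestResponses hR μ).image ((continuous_senderEU hS).comp (Continuous.prodMk_right μ))

lemma wFun_le_senderEU (hS : Continuous fun p : A × Θ => uS p.1 p.2)
    (hR : Continuous fun p : A × Θ => uR p.1 p.2) {μ : ProbabilityMeasure Θ} {a : A}
    (ha : a ∈ bestResponses uR μ) : wFun uS uR μ ≤ senderEU uS μ a :=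
  csInf_le (isCompact_senderEU_image hS hR μ).bddBelow (mem_image_of_mem _ ha)

lemma senderEU_le_vFun (hS : Continuous fun p : A × Θ => uS p.1 p.2)
    (hR : Continuous fun p : A × Θ => uR p.1 p.2) {μ : ProbabilityMeasure Θ} {a : A}
    (ha : a ∈ bestResponses uR μ) : senderEU uS μ a ≤ vFun uS uR μ :=
  le_csSup (isCompact_senderEU_image hS hR μ).bddAbove (mem_image_of_mem _ ha)

lemma eventually_forall_mem_bestResponses (hS : Continuous fun p : A × Θ => uS p.1 p.2)
    (hR : Continuous fun p : A × Θ => uR p.1 p.2) {C : Set A} (hC : IsClosed C)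
    {ν : ProbabilityMeasure Θ} {c : ℝ}
    (hc : ∀ a ∈ C, a ∈ bestResponses uR ν → c < senderEU uS ν a) :
    ∀ᶠ μ in 𝓝 ν, ∀ a ∈ C, a ∈ bestResponses uR μ → c < senderEU uS μ a := by
  refine hC.isCompact.eventually_forall_of_forall_eventually fun a ha => ?_
  by_cases haν : a ∈ bestResponses uR ν
  · have hlt : ∀ᶠ z in 𝓝 (ν, a), c < senderEU uS z.1 z.2 :=
      (continuous_senderEU hS).continuousAt.eventually_const_lt (hc a ha haν)
    exact hlt.mono fun z hz _ => hz
  · have hnot : ∀ᶠ z in 𝓝 (ν, a), z.2 ∉ bestResponses uR z.1 :=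
      (isClosed_bestResponses_graph hR).isOpen_compl.mem_nhds haν
    exact hnot.mono fun z hz hz' => (hz hz').elim

variable [Nonempty A]

lemma bestResponses_nonempty (hR : Continuous fun p : A × Θ => uR p.1 p.2)
    (μ : ProbabilityMeasure Θ) : (bestResponses uR μ).Nonempty := by
  obtain ⟨a, -, ha⟩ := isCompact_univ.exists_isMaxOn univ_nonempty
    ((continuous_senderEU hR).comp (Continuous.prodMk_right μ)).continuousOn
  exact ⟨a, fun a' => ha (mem_univ a')⟩

lemma exists_senderEU_eq_wFun (hS : Continuous fun p : A × Θ => uS p.1 p.2)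
    (hR : Continuous fun p : A × Θ => uR p.1 p.2) (μ : ProbabilityMeasure Θ) :
    ∃ a ∈ bestResponses uR μ, senderEU uS μ a = wFun uS uR μ :=
  (isCompact_senderEU_image hS hR μ).sInf_mem ((bestResponses_nonempty hR μ).image _)

lemma exists_senderEU_eq_vFun (hS : Continuous fun p : A × Θ => uS p.1 p.2)
    (hR : Continuous fun p : A × Θ => uR p.1 p.2) (μ : ProbabilityMeasure Θ) :
    ∃ a ∈ bestResponses uR μ, senderEU uS μ a = vFun uS uR μ :=
  (isCompact_senderEU_image hS hR μ).sSup_mem ((bestResponses_nonempty hR μ).image _)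

lemma wFun_le_vFun (hS : Continuous fun p : A × Θ => uS p.1 p.2)
    (hR : Continuous fun p : A × Θ => uR p.1 p.2) (μ : ProbabilityMeasure Θ) :
    wFun uS uR μ ≤ vFun uS uR μ := by
  obtain ⟨a, ha⟩ := bestResponses_nonempty hR μ
  exact (wFun_le_senderEU hS hR ha).trans (senderEU_le_vFun hS hR ha)

lemma exists_abs_wFun_le_and_abs_vFun_le (hS : Continuous fun p : A × Θ => uS p.1 p.2)
    (hR : Continuous fun p : A × Θ => uR p.1 p.2) :
    ∃ M, (∀ μ, |wFun uS uR μ| ≤ M) ∧ ∀ μ, |vFun uS uR μ| ≤ M := by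
  obtain ⟨M, hM⟩ := exists_abs_senderEU_le hS
  refine ⟨M, fun μ => ?_, fun μ => ?_⟩
  · obtain ⟨a, -, ha⟩ := exists_senderEU_eq_wFun hS hR μ
    exact ha ▸ hM μ a
  · obtain ⟨a, -, ha⟩ := exists_senderEU_eq_vFun hS hR μ
    exact ha ▸ hM μ a

lemma exists_isLeast_isGreatest_vFun_le [LinearOrder A] [OrderClosedTopology A]
    {ν : ProbabilityMeasure Θ}
    (hS : Continuous fun p : A × Θ => uS p.1 p.2) (hR : Continuous fun p : A × Θ => uR p.1 p.2)
    (hquasi : ∀ aL ∈ bestResponses uR ν, ∀ aM ∈ bestResponses uR ν, ∀ aH ∈ bestResponses uR ν,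
      aL ≤ aM → aM ≤ aH → senderEU uS ν aM ≤ max (senderEU uS ν aL) (senderEU uS ν aH)) :
    ∃ aL aH, IsLeast (bestResponses uR ν) aL ∧ IsGreatest (bestResponses uR ν) aH ∧
      vFun uS uR ν ≤ max (senderEU uS ν aL) (senderEU uS ν aH) := by
  have hcompact := isCompact_bestResponses hR ν
  have hnonempty := bestResponses_nonempty hR ν
  obtain ⟨aL, hL⟩ := hcompact.exists_isLeast hnonempty
  obtain ⟨aH, hH⟩ := hcompact.exists_isGreatest hnonempty
  obtain ⟨aM, hM, hv⟩ := exists_senderEU_eq_vFun hS hR ν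
  exact ⟨aL, aH, hL, hH, hv ▸ hquasi aL hL.1 aM hM aH hH.1 (hL.2 hM) (hH.2 hM)⟩

lemma eventually_lt_wFun_of_bestResponses_subset {ι : Type*} {l : Filter ι}
    (hS : Continuous fun p : A × Θ => uS p.1 p.2) (hR : Continuous fun p : A × Θ => uR p.1 p.2)
    {C : Set A} (hC : IsClosed C) {κ : ι → ProbabilityMeasure Θ} {ν : ProbabilityMeasure Θ}
    (hκ : Tendsto κ l (𝓝 ν)) (hκC : ∀ᶠ i in l, bestResponses uR (κ i) ⊆ C) {c : ℝ}
    (hc : ∀ a ∈ C, a ∈ bestResponses uR ν → c < senderEU uS ν a) :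
    ∀ᶠ i in l, c < wFun uS uR (κ i) := by
  filter_upwards [hκC, hκ.eventually (eventually_forall_mem_bestResponses hS hR hC hc)]
    with i hsub hlt
  obtain ⟨a, ha, hEU⟩ := exists_senderEU_eq_wFun hS hR (κ i)
  exact hEU ▸ hlt a (hsub ha) ha

lemma lowerSemicontinuous_wFun (hS : Continuous fun p : A × Θ => uS p.1 p.2)
    (hR : Continuous fun p : A × Θ => uR p.1 p.2) : LowerSemicontinuous (wFun uS uR) :=
  fun _ _ hc => eventually_lt_wFun_of_bestResponses_subset hS hR isClosed_univ tendsto_id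
    (.of_forall fun _ => subset_univ _) fun _ _ ha => hc.trans_le (wFun_le_senderEU hS hR ha)

end BestResponses

section Measurability

variable {Θ : Type*} [TopologicalSpace Θ] [CompactSpace Θ] [T2Space Θ]
  [SecondCountableTopology Θ] [MeasurableSpace Θ] [BorelSpace Θ]

instance instOpensMeasurableSpaceProbabilityMeasure :
    OpensMeasurableSpace (ProbabilityMeasure Θ) where
  borel_le := by
    rw [borel_eq_generateFrom_of_subbasis eq_generateFrom_integral]
    refine MeasurableSpace.generateFrom_le ?_
    rintro _ ⟨f, U, hU, rfl⟩
    exact measurable_integral_toMeasure f.measurable hU.measurableSet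

variable {A : Type*} [TopologicalSpace A] [CompactSpace A] [Nonempty A] {uS uR : A → Θ → ℝ}

lemma measurable_wFun (hS : Continuous fun p : A × Θ => uS p.1 p.2)
    (hR : Continuous fun p : A × Θ => uR p.1 p.2) : Measurable (wFun uS uR) :=
  (lowerSemicontinuous_wFun hS hR).measurable

lemma measurable_vFun (hS : Continuous fun p : A × Θ => uS p.1 p.2)
    (hR : Continuous fun p : A × Θ => uR p.1 p.2) : Measurable (vFun uS uR) := by
  rw [funext vFun_eq_neg_wFun_neg]
  exact (measurable_wFun hS.neg hR).neg

end Measurability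

section Tilt

variable {A Θ : Type*} [MeasurableSpace Θ] {m : Θ × Θ → Θ} {μ0 ν : ProbabilityMeasure Θ}

/-- The posterior `ν` perturbed by replacing, with small weight, a state `x` drawn from `ν` by
`m (x, y)`, where `y` is an independent draw from the prior. Taking `m` to be the maximum or the
minimum moves `ν` upward or downward. -/
noncomputable def tilt (hm : Measurable m) (μ0 : ProbabilityMeasure Θ) (ε : ℝ≥0)
    (ν : ProbabilityMeasure Θ) : ProbabilityMeasure Θ :=
  mix ε ν ((ν.prod μ0).map hm.aemeasurable)

lemma measurable_tilt (hm : Measurable m) (μ0 : ProbabilityMeasure Θ) (ε : ℝ≥0) :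
    Measurable (tilt hm μ0 ε) := by
  refine measurable_mix ε measurable_id (Measurable.subtype_mk ?_)
  exact (Measure.measurable_map m hm).comp
    (ProbabilityMeasure.measurable_fun_prod.comp (measurable_id.prodMk measurable_const))

lemma map_prod_le_add (hm : Measurable m) (hmem : ∀ z, m z = z.1 ∨ m z = z.2) :
    ((ν : Measure Θ).prod (μ0 : Measure Θ)).map m ≤ ν + (μ0 : Measure Θ) := by
  refine Measure.le_intro fun B hB _ => ?_
  have hsub : m ⁻¹' B ⊆ B ×ˢ univ ∪ univ ×ˢ B := fun z hz => by
    rcases hmem z with h | h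
    · exact .inl ⟨h ▸ hz, mem_univ _⟩
    · exact .inr ⟨mem_univ _, h ▸ hz⟩
  calc ((ν : Measure Θ).prod (μ0 : Measure Θ)).map m B
      ≤ (ν : Measure Θ).prod (μ0 : Measure Θ) (B ×ˢ univ ∪ univ ×ˢ B) := by
        rw [Measure.map_apply hm hB]
        exact measure_mono hsub
    _ ≤ (ν : Measure Θ).prod (μ0 : Measure Θ) (B ×ˢ univ) +
        (ν : Measure Θ).prod (μ0 : Measure Θ) (univ ×ˢ B) := measure_union_le _ _
    _ = (ν + (μ0 : Measure Θ)) B := by simp [Measure.prod_prod]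

lemma tilt_le (hm : Measurable m) (hmem : ∀ z, m z = z.1 ∨ m z = z.2) (ε : ℝ≥0) :
    (tilt hm μ0 ε ν : Measure Θ) ≤ ν + ε • (μ0 : Measure Θ) := by
  have hweight : (1 + ε)⁻¹ ≤ 1 := inv_le_one_of_one_le₀ le_self_add
  calc (tilt hm μ0 ε ν : Measure Θ)
      ≤ (1 + ε)⁻¹ • ((ν : Measure Θ) + ε • (ν + (μ0 : Measure Θ))) := by
        rw [tilt, toMeasure_mix, ProbabilityMeasure.toMeasure_map,
          ProbabilityMeasure.toMeasure_prod]
        gcongr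
        exact map_prod_le_add hm hmem
    _ = ν + (1 + ε)⁻¹ • (ε • (μ0 : Measure Θ)) := by
        rw [smul_add ε, ← add_assoc, ← one_smul ℝ≥0 (ν : Measure Θ), smul_smul, mul_one, ← add_smul,
          smul_add, inv_smul_smul₀ (by positivity), one_smul]
    _ ≤ ν + (1 : ℝ≥0) • (ε • (μ0 : Measure Θ)) := by gcongr
    _ = ν + ε • (μ0 : Measure Θ) := by rw [one_smul]

lemma integral_lt_integral_map_prod (hm : Measurable m) {D : Θ → ℝ} (hD : Measurable D) {M : ℝ}
    (hDM : ∀ θ, |D θ| ≤ M) (hlt : ∀ z, m z ≠ z.1 → D z.1 < D (m z))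
    (hmove : ¬ ∀ᵐ z ∂(ν : Measure Θ).prod (μ0 : Measure Θ), m z = z.1) :
    ∫ θ, D θ ∂(ν : Measure Θ) < ∫ θ, D θ ∂((ν : Measure Θ).prod (μ0 : Measure Θ)).map m := by
  have hfst : Integrable (fun z : Θ × Θ => D z.1) ((ν : Measure Θ).prod (μ0 : Measure Θ)) :=
    .of_bound (hD.comp measurable_fst).aestronglyMeasurable M (ae_of_all _ fun z => hDM z.1)
  have hmapped : Integrable (fun z => D (m z)) ((ν : Measure Θ).prod (μ0 : Measure Θ)) :=
    .of_bound (hD.comp hm).aestronglyMeasurable M (ae_of_all _ fun z => hDM (m z))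
  have hle (z : Θ × Θ) : D z.1 ≤ D (m z) := by
    by_cases hz : m z = z.1
    · rw [hz]
    · exact (hlt z hz).le
  have hfst_eq : ∫ z : Θ × Θ, D z.1 ∂(ν : Measure Θ).prod (μ0 : Measure Θ) =
      ∫ θ, D θ ∂(ν : Measure Θ) := by
    rw [integral_fun_fst, probReal_univ, one_smul]
  rw [integral_map hm.aemeasurable hD.aestronglyMeasurable, ← hfst_eq]
  refine lt_of_le_of_ne (integral_mono hfst hmapped hle) fun heq => hmove ?_
  filter_upwards [(integral_eq_iff_of_ae_le hfst hmapped (ae_of_all _ hle)).1 heq] with z hz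
  exact not_not.1 fun hne => (hlt z hne).ne hz

lemma integral_lt_integral_tilt (hm : Measurable m) {D : Θ → ℝ} (hD : Measurable D) {M : ℝ}
    (hDM : ∀ θ, |D θ| ≤ M) (hlt : ∀ z, m z ≠ z.1 → D z.1 < D (m z))
    (hmove : ¬ ∀ᵐ z ∂(ν : Measure Θ).prod (μ0 : Measure Θ), m z = z.1) {ε : ℝ≥0} (hε : ε ≠ 0) :
    ∫ θ, D θ ∂(ν : Measure Θ) < ∫ θ, D θ ∂(tilt hm μ0 ε ν : Measure Θ) := by
  have hint (P : ProbabilityMeasure Θ) : Integrable D (P : Measure Θ) :=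
    .of_bound hD.aestronglyMeasurable M (ae_of_all _ hDM)
  have hraise := integral_lt_integral_map_prod hm hD hDM hlt hmove
  rw [tilt, integral_mix ε (hint _) (hint _), ProbabilityMeasure.toMeasure_map,
    ProbabilityMeasure.toMeasure_prod, lt_inv_mul_iff₀ (by positivity)]
  nlinarith [NNReal.coe_pos.2 (pos_of_ne_zero hε)]

lemma tendsto_tilt [TopologicalSpace Θ] [OpensMeasurableSpace Θ] (hm : Measurable m)
    (μ0 ν : ProbabilityMeasure Θ) :
    Tendsto (fun ε => tilt hm μ0 ε ν) (𝓝 0) (𝓝 ν) :=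
  tendsto_mix ν _

variable [TopologicalSpace A] [TopologicalSpace Θ] [CompactSpace Θ] [OpensMeasurableSpace Θ]
  {uS uR : A → Θ → ℝ}

lemma notMem_bestResponses_tilt (hR : Continuous fun p : A × Θ => uR p.1 p.2)
    (hm : Measurable m) {a a' : A} (ha : a ∈ bestResponses uR ν)
    (hlt : ∀ z, m z ≠ z.1 → uR a z.1 - uR a' z.1 < uR a (m z) - uR a' (m z))
    (hmove : ¬ ∀ᵐ z ∂(ν : Measure Θ).prod (μ0 : Measure Θ), m z = z.1) {ε : ℝ≥0} (hε : ε ≠ 0) :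
    a' ∉ bestResponses uR (tilt hm μ0 ε ν) := by
  let slice (b : A) : C(Θ, ℝ) := ⟨uR b, hR.comp (Continuous.prodMk_right b)⟩
  let D : C(Θ, ℝ) := slice a - slice a'
  have hD (P : ProbabilityMeasure Θ) : ∫ θ, D θ ∂(P : Measure Θ) =
      ∫ θ, uR a θ ∂(P : Measure Θ) - ∫ θ, uR a' θ ∂(P : Measure Θ) :=
    integral_sub (integrable_continuousMap (slice a) P) (integrable_continuousMap (slice a') P)
  have hgain := integral_lt_integral_tilt hm D.measurable D.norm_coe_le_norm hlt hmove hε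
  rw [hD, hD] at hgain
  intro ha'
  linarith [ha a', ha' a]

lemma eventually_lt_wFun_tilt [CompactSpace A] [Nonempty A]
    (hS : Continuous fun p : A × Θ => uS p.1 p.2) (hR : Continuous fun p : A × Θ => uR p.1 p.2)
    (hm : Measurable m) {C : Set A} (hC : IsClosed C) {a : A} (ha : a ∈ bestResponses uR ν)
    (haC : ∀ b ∈ C, b ∈ bestResponses uR ν → b = a)
    (hlt : ∀ a' ∉ C, ∀ z, m z ≠ z.1 → uR a z.1 - uR a' z.1 < uR a (m z) - uR a' (m z))
    (hfix : (∀ᵐ z ∂(ν : Measure Θ).prod (μ0 : Measure Θ), m z = z.1) →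
      (bestResponses uR ν).Subsingleton) {c : ℝ} (hc : c < senderEU uS ν a) :
    ∀ᶠ ε in 𝓝[>] 0, c < wFun uS uR (tilt hm μ0 ε ν) := by
  have htilt : Tendsto (fun ε => tilt hm μ0 ε ν) (𝓝[>] 0) (𝓝 ν) :=
    (tendsto_tilt hm μ0 ν).mono_left nhdsWithin_le_nhds
  by_cases hmove : ∀ᵐ z ∂(ν : Measure Θ).prod (μ0 : Measure Θ), m z = z.1
  · exact eventually_lt_wFun_of_bestResponses_subset hS hR isClosed_univ htilt
      (.of_forall fun _ => subset_univ _) fun b _ hb => hfix hmove ha hb ▸ hc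
  · refine eventually_lt_wFun_of_bestResponses_subset hS hR hC htilt ?_
      fun b hbC hb => haC b hbC hb ▸ hc
    filter_upwards [eventually_mem_nhdsWithin] with ε hε a' ha'
    by_contra haC'
    exact notMem_bestResponses_tilt hR hm ha (hlt a' haC') hmove (ne_of_gt hε) ha'

end Tilt

section SupportEndpoints

variable {A Θ : Type*} [MeasurableSpace Θ]

lemma ae_mem_imp_of_subsingleton {E : Set Θ} (hE : E.Subsingleton) {μ : Measure Θ}
    {P : Θ → Prop} (h : ∀ θ ∈ E, μ {θ} = 0 ∨ P θ) : ∀ᵐ θ ∂μ, θ ∈ E → P θ := by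
  rcases E.eq_empty_or_nonempty with rfl | ⟨e, he⟩
  · exact ae_of_all _ fun θ hθ => hθ.elim
  rcases h e he with hnull | hP
  · filter_upwards [measure_eq_zero_iff_ae_notMem.1 hnull] with θ hθ hθE
    exact (hθ (hE hθE he)).elim
  · exact ae_of_all _ fun θ hθ => hE he hθ ▸ hP

lemma subsingleton_bestResponses_of_ae_mem {uR : A → Θ → ℝ} {E : Set Θ} (hE : E.Subsingleton)
    {ν : ProbabilityMeasure Θ} (hν : ∀ᵐ θ ∂(ν : Measure Θ), θ ∈ E)
    (huniq : ∀ᵐ θ ∂(ν : Measure Θ), θ ∈ E → ∃ a, bestResponses uR (diracPM θ) = {a}) :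
    (bestResponses uR ν).Subsingleton := by
  obtain ⟨θ, hθ, rfl⟩ := exists_eq_diracPM_of_ae_mem hE hν
  obtain ⟨θ', hθ', huniq'⟩ := (hν.and huniq).exists
  obtain ⟨a, ha⟩ := huniq' hθ'
  rw [hE hθ hθ', ha]
  exact subsingleton_singleton

lemma subsingleton_setOf_isGreatest {α : Type*} [PartialOrder α] (s : Set α) :
    {x | IsGreatest s x}.Subsingleton :=
  fun _ hx _ hy => hx.unique hy

lemma subsingleton_setOf_isLeast {α : Type*} [PartialOrder α] (s : Set α) :
    {x | IsLeast s x}.Subsingleton :=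
  fun _ hx _ hy => hx.unique hy

variable [TopologicalSpace Θ]

lemma ae_mem_msupport [HereditarilyLindelofSpace Θ] (μ : ProbabilityMeasure Θ) :
    ∀ᵐ θ ∂(μ : Measure Θ), θ ∈ msupport μ := by
  rw [msupport_eq_support]
  exact Measure.support_mem_ae

lemma msupport_subset_of_isClosed {μ : ProbabilityMeasure Θ} {C : Set Θ} (hC : IsClosed C)
    (hμ : ∀ᵐ θ ∂(μ : Measure Θ), θ ∈ C) : msupport μ ⊆ C := by
  rw [msupport_eq_support]
  exact Measure.support_subset_of_isClosed hC hμ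

variable [LinearOrder Θ] [OrderClosedTopology Θ] {μ0 ν : ProbabilityMeasure Θ}

lemma ae_isGreatest_msupport (hν : ∀ᵐ θ ∂(ν : Measure Θ), θ ∈ msupport μ0)
    (hmax : ∀ᵐ z ∂(ν : Measure Θ).prod (μ0 : Measure Θ), max z.1 z.2 = z.1) :
    ∀ᵐ θ ∂(ν : Measure Θ), IsGreatest (msupport μ0) θ := by
  filter_upwards [hν, Measure.ae_ae_of_ae_prod hmax] with θ hθ hle
  exact ⟨hθ, msupport_subset_of_isClosed isClosed_Iic (hle.mono fun _ => max_eq_left_iff.1)⟩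

lemma ae_isLeast_msupport (hν : ∀ᵐ θ ∂(ν : Measure Θ), θ ∈ msupport μ0)
    (hmin : ∀ᵐ z ∂(ν : Measure Θ).prod (μ0 : Measure Θ), min z.1 z.2 = z.1) :
    ∀ᵐ θ ∂(ν : Measure Θ), IsLeast (msupport μ0) θ := by
  filter_upwards [hν, Measure.ae_ae_of_ae_prod hmin] with θ hθ hge
  exact ⟨hθ, msupport_subset_of_isClosed isClosed_Ici (hge.mono fun _ => min_eq_left_iff.1)⟩

end SupportEndpoints

section Ordered

variable {A Θ : Type*} [TopologicalSpace A] [CompactSpace A] [Nonempty A] [LinearOrder Θ]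
  [TopologicalSpace Θ] [OrderClosedTopology Θ] [CompactSpace Θ] [SecondCountableTopology Θ]
  [MeasurableSpace Θ] [BorelSpace Θ] {uS uR : A → Θ → ℝ}

lemma exists_perturbation_wFun_eq_max (hS : Continuous fun p : A × Θ => uS p.1 p.2)
    (hR : Continuous fun p : A × Θ => uR p.1 p.2) (μ0 : ProbabilityMeasure Θ) (ε : ℝ≥0) :
    ∃ T : ProbabilityMeasure Θ → ProbabilityMeasure Θ, Measurable T ∧
      (∀ ν, (T ν : Measure Θ) ≤ ν + ε • (μ0 : Measure Θ)) ∧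
      ∀ ν, wFun uS uR (T ν) =
        max (wFun uS uR (tilt (measurable_fst.max measurable_snd) μ0 ε ν))
          (wFun uS uR (tilt (measurable_fst.min measurable_snd) μ0 ε ν)) := by
  obtain ⟨T, hT, hmem, hmax⟩ := exists_measurable_comp_eq_max (measurable_wFun hS hR)
    (measurable_tilt (measurable_fst.max measurable_snd) μ0 ε)
    (measurable_tilt (measurable_fst.min measurable_snd) μ0 ε)
  refine ⟨T, hT, fun ν => ?_, hmax⟩
  rcases hmem ν with h | h <;> rw [h]
  · exact tilt_le _ (fun z => max_choice z.1 z.2) ε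
  · exact tilt_le _ (fun z => min_choice z.1 z.2) ε

variable [LinearOrder A] [OrderClosedTopology A] {μ0 ν : ProbabilityMeasure Θ} {a : A} {c : ℝ}

lemma eventually_lt_wFun_tilt_max (hS : Continuous fun p : A × Θ => uS p.1 p.2)
    (hR : Continuous fun p : A × Θ => uR p.1 p.2)
    (hsid : ∀ a a', a < a' → StrictMono fun θ => uR a' θ - uR a θ)
    (hν : ∀ᵐ θ ∂(ν : Measure Θ), θ ∈ msupport μ0)
    (huniq : ∀ᵐ θ ∂(ν : Measure Θ), IsGreatest (msupport μ0) θ →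
      ∃ a, bestResponses uR (diracPM θ) = {a})
    (ha : IsGreatest (bestResponses uR ν) a) (hc : c < senderEU uS ν a) :
    ∀ᶠ ε in 𝓝[>] 0, c < wFun uS uR (tilt (measurable_fst.max measurable_snd) μ0 ε ν) := by
  refine eventually_lt_wFun_tilt hS hR _ isClosed_Ici ha.1 (fun b hab hb => (ha.2 hb).antisymm hab)
    (fun a' ha' z hz => ?_) (fun hfix => ?_) hc
  · exact hsid a' a (not_le.1 ha') (lt_of_le_of_ne' (le_max_left _ _) hz)
  · exact subsingleton_bestResponses_of_ae_mem (subsingleton_setOf_isGreatest _)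
      (ae_isGreatest_msupport hν hfix) huniq

lemma eventually_lt_wFun_tilt_min (hS : Continuous fun p : A × Θ => uS p.1 p.2)
    (hR : Continuous fun p : A × Θ => uR p.1 p.2)
    (hsid : ∀ a a', a < a' → StrictMono fun θ => uR a' θ - uR a θ)
    (hν : ∀ᵐ θ ∂(ν : Measure Θ), θ ∈ msupport μ0)
    (huniq : ∀ᵐ θ ∂(ν : Measure Θ), IsLeast (msupport μ0) θ →
      ∃ a, bestResponses uR (diracPM θ) = {a})
    (ha : IsLeast (bestResponses uR ν) a) (hc : c < senderEU uS ν a) :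
    ∀ᶠ ε in 𝓝[>] 0, c < wFun uS uR (tilt (measurable_fst.min measurable_snd) μ0 ε ν) := by
  refine eventually_lt_wFun_tilt hS hR _ isClosed_Iic ha.1 (fun b hba hb => hba.antisymm (ha.2 hb))
    (fun a' ha' z hz => ?_) (fun hfix => ?_) hc
  · have hlt := hsid a a' (not_le.1 ha') (lt_of_le_of_ne (min_le_left z.1 z.2) hz)
    dsimp only at hlt
    linarith
  · exact subsingleton_bestResponses_of_ae_mem (subsingleton_setOf_isLeast _)
      (ae_isLeast_msupport hν hfix) huniq

theorem unique_payoff_ordered_general (hS : Continuous fun p : A × Θ => uS p.1 p.2)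
    (hR : Continuous fun p : A × Θ => uR p.1 p.2)
    (hsid : ∀ a a', a < a' → StrictMono fun θ => uR a' θ - uR a θ)
    (hquasi : ∀ μ : ProbabilityMeasure Θ, ∀ aL ∈ bestResponses uR μ, ∀ aM ∈ bestResponses uR μ,
      ∀ aH ∈ bestResponses uR μ, aL ≤ aM → aM ≤ aH →
        senderEU uS μ aM ≤ max (senderEU uS μ aL) (senderEU uS μ aH))
    (hbdry : ∀ θ, IsLeast (msupport μ0) θ ∨ IsGreatest (msupport μ0) θ →
      (μ0 : Measure Θ) {θ} = 0 ∨ ∃ a, bestResponses uR (diracPM θ) = {a}) :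
    wHat uS uR μ0 = vHat uS uR μ0 := by
  obtain ⟨M, hwM, hvM⟩ := exists_abs_wFun_le_and_abs_vFun_le hS hR
  have hw := measurable_wFun hS hR
  have hv := measurable_vFun hS hR
  choose T hT hTle hTw using exists_perturbation_wFun_eq_max hS hR μ0
  refine le_antisymm (persuasionValue_mono hw hv hwM hvM (wFun_le_vFun hS hR))
    (persuasionValue_le_of_perturbation hw hv hwM hvM hT hTle fun p hp => ?_)
  have hbot := ae_mem_imp_of_subsingleton (subsingleton_setOf_isLeast _)
    fun θ hθ => hbdry θ (.inl hθ)
  have htop := ae_mem_imp_of_subsingleton (subsingleton_setOf_isGreatest _)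
    fun θ hθ => hbdry θ (.inr hθ)
  filter_upwards [ae_ae_of_mem_infoPolicies hp (ae_mem_msupport μ0),
    ae_ae_of_mem_infoPolicies hp hbot, ae_ae_of_mem_infoPolicies hp htop] with ν hν hνbot hνtop c hc
  obtain ⟨aL, aH, hL, hH, hle⟩ := exists_isLeast_isGreatest_vFun_le hS hR (hquasi ν)
  simp only [hTw, lt_max_iff]
  rcases lt_max_iff.1 (hc.trans_le hle) with hcL | hcH
  · exact (eventually_lt_wFun_tilt_min hS hR hsid hν hνbot hL hcL).mono fun _ => .inr
  · exact (eventually_lt_wFun_tilt_max hS hR hsid hν hνtop hH hcH).mono fun _ => .inl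

end Ordered

lemma apply_le_max_of_quasiconcave_or_quasiconvex {α β γ : Type*} [PartialOrder α] [LinearOrder β]
    [LinearOrder γ] {f : α → β} {g : α → γ}
    (h : (∀ aL aM aH, aL < aM → aM < aH → min (f aL) (f aH) < f aM) ∨
      ∀ aL aM aH, aL ≤ aM → aM ≤ aH → g aM ≤ max (g aL) (g aH))
    {aL aM aH : α} (hL : ∀ a, f a ≤ f aL) (hH : ∀ a, f a ≤ f aH) (hLM : aL ≤ aM)
    (hMH : aM ≤ aH) : g aM ≤ max (g aL) (g aH) := by
  rcases h with hconcave | hconvex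
  · rcases hLM.eq_or_lt with rfl | hLM
    · exact le_max_left _ _
    rcases hMH.eq_or_lt with rfl | hMH
    · exact le_max_right _ _
    exact absurd (hconcave aL aM aH hLM hMH) (le_min (hL aM) (hH aM)).not_gt
  · exact hconvex aL aM aH hLM hMH

/-- **Uniqueness in the ordered model.** Suppose the environment is ordered (`A, Θ ⊆ ℝ`,
`u_R` has strictly increasing differences, and at each belief the receiver's expected
payoff is strictly quasiconcave in the action or the sender's expected payoff is weakly
quasiconvex in the action), and for each endpoint `θ̄` of the support of the prior,
either `μ0({θ̄}) = 0` or the receiver's best response at `δ_θ̄` is unique. Then the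
sender has a unique equilibrium payoff: `ŵ(μ0) = v̂(μ0)`. -/
theorem unique_payoff_ordered
    (A Θ : Set ℝ) [Nonempty ↥A] [Nonempty ↥Θ] [CompactSpace ↥A] [CompactSpace ↥Θ]
    (uS uR : ↥A → ↥Θ → ℝ)
    (hS : Continuous fun p : ↥A × ↥Θ => uS p.1 p.2)
    (hR : Continuous fun p : ↥A × ↥Θ => uR p.1 p.2)
    (hsid : ∀ a a' : ↥A, (a : ℝ) < (a' : ℝ) → ∀ θ θ' : ↥Θ, (θ : ℝ) < (θ' : ℝ) →
      uR a' θ - uR a θ < uR a' θ' - uR a θ')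
    (hquasi : ∀ μ : ProbabilityMeasure ↥Θ,
      (∀ aL aM aH : ↥A, (aL : ℝ) < (aM : ℝ) → (aM : ℝ) < (aH : ℝ) →
        min (∫ θ, uR aL θ ∂(μ : Measure ↥Θ)) (∫ θ, uR aH θ ∂(μ : Measure ↥Θ)) <
          ∫ θ, uR aM θ ∂(μ : Measure ↥Θ)) ∨
      (∀ aL aM aH : ↥A, (aL : ℝ) ≤ (aM : ℝ) → (aM : ℝ) ≤ (aH : ℝ) →
        senderEU uS μ aM ≤ max (senderEU uS μ aL) (senderEU uS μ aH)))
    (μ0 : ProbabilityMeasure ↥Θ)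
    (hbdry : ∀ θbar : ↥Θ,
      ((θbar : ℝ) = sInf ((fun t : ↥Θ => (t : ℝ)) '' msupport μ0) ∨
        (θbar : ℝ) = sSup ((fun t : ↥Θ => (t : ℝ)) '' msupport μ0)) →
      ((μ0 : Measure ↥Θ) {θbar} = 0 ∨ ∃ a : ↥A, bestResponses uR (diracPM θbar) = {a})) :
    wHat uS uR μ0 = vHat uS uR μ0 :=
  unique_payoff_ordered_general hS hR (fun a a' h _ _ => hsid a a' h _ _)
    (fun μ _ hL _ _ _ hH => apply_le_max_of_quasiconcave_or_quasiconvex (hquasi μ) hL hH)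
    fun θ hθ => hbdry θ (hθ.imp
      (fun h => ((Subtype.mono_coe _).map_isLeast h).csInf_eq.symm)
      fun h => ((Subtype.mono_coe _).map_isGreatest h).csSup_eq.symm)
end

section
/- For every credibility χ ∈ [0,1], the set of χ-PBE sender payoffs is nonempty and lies weakly below the interval [ŵ(μ0), v̂(μ0)] in the strong set order; moreover, for χ = 1 the set of χ-PBE sender payoffs equals [ŵ(μ0), v̂(μ0)]. -/
open MeasureTheory Filter Topology

/-- A probability vector on a finite set. -/
def IsDist {X : Type*} [Fintype X] (f : X → ℝ) : Prop :=
  (∀ x, 0 ≤ f x) ∧ ∑ x, f x = 1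

/-- An experiment (official reporting protocol): a state-contingent distribution over
messages. -/
def IsExperiment {Θ M : Type*} [Fintype M] (ψ : Θ → M → ℝ) : Prop :=
  ∀ θ, IsDist (ψ θ)

/-- The receiver's best responses `A*_R(μ)` to a belief vector `μ` on a finite state
space. -/
def BRf {A Θ : Type*} [Fintype Θ] (uR : A → Θ → ℝ) (μ : Θ → ℝ) : Set A :=
  {a | ∀ a' : A, ∑ θ, uR a' θ * μ θ ≤ ∑ θ, uR a θ * μ θ}

/-- The belief simplex `ΔΘ` over a finite state space, viewed as a subspace of `ℝ^Θ`. -/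
abbrev Belief (Θ : Type*) [Fintype Θ] : Type _ := {f : Θ → ℝ // f ∈ stdSimplex ℝ Θ}

/-- The sender's upper value function `v(μ) = max_{a ∈ A*_R(μ)} u_S(a)` (state-independent
sender utility). -/
noncomputable def vG {A Θ : Type*} [Fintype Θ] (uS : A → ℝ) (uR : A → Θ → ℝ)
    (μ : Θ → ℝ) : ℝ :=
  sSup (uS '' BRf uR μ)

/-- The sender's lower value function `w(μ) = min_{a ∈ A*_R(μ)} u_S(a)`. -/
noncomputable def wG {A Θ : Type*} [Fintype Θ] (uS : A → ℝ) (uR : A → Θ → ℝ)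
    (μ : Θ → ℝ) : ℝ :=
  sInf (uS '' BRf uR μ)

/-- The set `I(μ0)` of information policies: Borel probability measures on the belief
simplex whose barycenter is the prior `μ0`. -/
def IPolF {Θ : Type*} [Fintype Θ] (μ0 : Θ → ℝ) : Set (ProbabilityMeasure (Belief Θ)) :=
  {p | ∀ θ : Θ, ∫ μ, (μ : Belief Θ).1 θ ∂(p : Measure (Belief Θ)) = μ0 θ}

/-- `v̂(μ0)`: the sender's Bayesian persuasion value. -/
noncomputable def vHatG {A Θ : Type*} [Fintype Θ] (uS : A → ℝ) (uR : A → Θ → ℝ)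
    (μ0 : Θ → ℝ) : ℝ :=
  sSup ((fun p : ProbabilityMeasure (Belief Θ) =>
    ∫ μ, vG uS uR (μ : Belief Θ).1 ∂(p : Measure (Belief Θ))) '' IPolF μ0)

/-- `ŵ(μ0)`: the sender's worst equilibrium value under full commitment. -/
noncomputable def wHatG {A Θ : Type*} [Fintype Θ] (uS : A → ℝ) (uR : A → Θ → ℝ)
    (μ0 : Θ → ℝ) : ℝ :=
  sSup ((fun p : ProbabilityMeasure (Belief Θ) =>
    ∫ μ, wG uS uR (μ : Belief Θ).1 ∂(p : Measure (Belief Θ))) '' IPolF μ0)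

/-- The sender's expected payoff in the partial-credibility game from (provisionally)
choosing experiment `ψ'`, given influencing strategy `σ` and receiver strategy `α`. -/
noncomputable def chiValue {A Θ M : Type*} [Fintype A] [Fintype Θ] [Fintype M]
    (uS : A → ℝ) (μ0 : Θ → ℝ) (χ : ℝ)
    (σ : Θ → (Θ → M → ℝ) → M → ℝ) (α : M → (Θ → M → ℝ) → A → ℝ)
    (ψ' : Θ → M → ℝ) : ℝ :=
  ∑ θ, μ0 θ * ∑ m, (χ * ψ' θ m + (1 - χ) * σ θ ψ' m) * ∑ a, uS a * α m ψ' a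

/-- Perfect Bayesian `χ`-equilibrium of the partial-credibility persuasion game. -/
def IsChiPBE {A Θ M : Type*} [Fintype A] [Fintype Θ] [Fintype M]
    (uS : A → ℝ) (uR : A → Θ → ℝ) (μ0 : Θ → ℝ) (χ : ℝ)
    (ψ : Θ → M → ℝ) (σ : Θ → (Θ → M → ℝ) → M → ℝ)
    (α : M → (Θ → M → ℝ) → A → ℝ) (β : M → (Θ → M → ℝ) → Θ → ℝ) : Prop :=
  IsExperiment ψ ∧
  (∀ ψ' : Θ → M → ℝ, IsExperiment ψ' → ∀ θ, IsDist (σ θ ψ')) ∧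
  (∀ ψ' : Θ → M → ℝ, IsExperiment ψ' → ∀ m, IsDist (α m ψ')) ∧
  (∀ ψ' : Θ → M → ℝ, IsExperiment ψ' → ∀ m, IsDist (β m ψ')) ∧
  -- (1) the sender's experiment choice is optimal
  (∀ ψ' : Θ → M → ℝ, IsExperiment ψ' →
    chiValue uS μ0 χ σ α ψ' ≤ chiValue uS μ0 χ σ α ψ) ∧
  -- (2) the receiver best responds to his beliefs
  (∀ ψ' : Θ → M → ℝ, IsExperiment ψ' → ∀ (m : M) (a : A),
    α m ψ' a ≠ 0 → a ∈ BRf uR (β m ψ')) ∧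
  -- (3) beliefs are Bayesian
  (∀ ψ' : Θ → M → ℝ, IsExperiment ψ' → ∀ (m : M) (θ : Θ),
    β m ψ' θ * (∑ θ', μ0 θ' * (χ * ψ' θ' m + (1 - χ) * σ θ' ψ' m)) =
      μ0 θ * (χ * ψ' θ m + (1 - χ) * σ θ ψ' m)) ∧
  -- (4) the influencing sender's message choice is optimal
  (∀ ψ' : Θ → M → ℝ, IsExperiment ψ' → ∀ (θ : Θ) (m : M), σ θ ψ' m ≠ 0 →
    ∀ m' : M, ∑ a, uS a * α m' ψ' a ≤ ∑ a, uS a * α m ψ' a)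

/-- The set of sender `χ`-PBE payoffs. -/
def chiPBEPayoffs (A : Type*) {Θ : Type*} (M : Type*) [Fintype A] [Fintype Θ] [Fintype M]
    (uS : A → ℝ) (uR : A → Θ → ℝ) (μ0 : Θ → ℝ) (χ : ℝ) : Set ℝ :=
  {s | ∃ (ψ : Θ → M → ℝ) (σ : Θ → (Θ → M → ℝ) → M → ℝ)
      (α : M → (Θ → M → ℝ) → A → ℝ) (β : M → (Θ → M → ℝ) → Θ → ℝ),
    IsChiPBE uS uR μ0 χ ψ σ α β ∧ s = chiValue uS μ0 χ σ α ψ}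

/-- `w*_χ(μ0)`: the infimum sender `χ`-PBE payoff. -/
noncomputable def wStar (A : Type*) {Θ : Type*} (M : Type*)
    [Fintype A] [Fintype Θ] [Fintype M]
    (uS : A → ℝ) (uR : A → Θ → ℝ) (μ0 : Θ → ℝ) (χ : ℝ) : ℝ :=
  sInf (chiPBEPayoffs A M uS uR μ0 χ)

/-!
An equilibrium of the subgame after an experiment `ψ` is described by the joint masses `d` of
messages and states sent by `ψ`, those `c` of the influencing sender, and mixed replies. Messages
off the path may be answered like the best message on the path, so such *outcomes* are cut out of a
compact set by weak inequalities. They exist after every `ψ`: allocate `c` in units of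
size `1 / N` so as to maximise a potential, and let `N` tend to infinity.

Fix `t ∈ [ŵ, s]`, where `s` is an equilibrium payoff. On the path, the outcome behind `s` can be
lowered to one worth exactly `t` by pooling its best messages with the prior. Off the path, every
experiment has an outcome worth at most `ŵ`, because penalizing the receiver slightly for what
benefits the sender selects replies that are worst for the sender. Hence `t` is an equilibrium
payoff.

At `χ = 1` the influencing sender has no mass, so an outcome is a decomposition of the prior with
best replies. Pooling posteriors with the same best responses makes every information policy finite,
and a basic solution of the linear program over the pooled posteriors needs at most `|Θ|` messages,
so deviations reach `ŵ` and the best outcome is worth `v̂`.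
-/

namespace PartialCredibility

section Normalize

variable {ι : Type*} [Fintype ι] {b ν : ι → ℝ}

/-- The probability vector proportional to a nonnegative weight vector `b`, defaulting to `ν` when
`b` has no mass. Posterior beliefs and conditional message distributions have this form. -/
noncomputable def normalizeD (b ν : ι → ℝ) : ι → ℝ :=
  if ∑ i, b i = 0 then ν else (∑ i, b i)⁻¹ • b

lemma sum_smul_normalizeD (hb : 0 ≤ b) (ν : ι → ℝ) : (∑ i, b i) • normalizeD b ν = b := by
  unfold normalizeD
  split_ifs with h
  · rw [h, zero_smul, (Fintype.sum_eq_zero_iff_of_nonneg hb).1 h]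
  · rw [smul_inv_smul₀ h]

lemma normalizeD_mem_stdSimplex (hb : 0 ≤ b) (hν : ν ∈ stdSimplex ℝ ι) :
    normalizeD b ν ∈ stdSimplex ℝ ι := by
  unfold normalizeD
  split_ifs with h
  · exact hν
  · refine ⟨fun i => mul_nonneg (inv_nonneg.2 (Finset.sum_nonneg fun i _ => hb i)) (hb i), ?_⟩
    simp only [Pi.smul_apply, smul_eq_mul, ← Finset.mul_sum, inv_mul_cancel₀ h]

lemma ne_zero_or_ne_zero_of_normalizeD_ne_zero {i : ι} (h : normalizeD b ν i ≠ 0) :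
    b i ≠ 0 ∨ ν i ≠ 0 := by
  unfold normalizeD at h
  split_ifs at h
  · exact .inr h
  · exact .inl (right_ne_zero_of_mul h)

end Normalize

section Split

variable {Θ M : Type*} [Fintype M] {μ ν : Θ → ℝ} {b c : M → Θ → ℝ}

/-- A decomposition of the weight vector `μ` over messages: `b m θ` is the joint mass of message `m`
and state `θ`, so that `b m` is an unnormalised posterior. -/
structure IsSplit (μ : Θ → ℝ) (b : M → Θ → ℝ) : Prop where
  nonneg : ∀ m θ, 0 ≤ b m θ
  sum_eq : ∀ θ, ∑ m, b m θ = μ θ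

namespace IsSplit

lemma le (hb : IsSplit μ b) (m : M) (θ : Θ) : b m θ ≤ μ θ :=
  hb.sum_eq θ ▸ Finset.single_le_sum (f := fun m => b m θ) (fun m _ => hb.nonneg m θ)
    (Finset.mem_univ m)

lemma eq_zero (hb : IsSplit 0 b) : b = 0 :=
  funext fun m => funext fun θ => (hb.le m θ).antisymm (hb.nonneg m θ)

lemma add (hb : IsSplit μ b) (hc : IsSplit ν c) : IsSplit (μ + ν) (b + c) where
  nonneg m θ := add_nonneg (hb.nonneg m θ) (hc.nonneg m θ)
  sum_eq θ := by
    simp only [Pi.add_apply, Finset.sum_add_distrib, hb.sum_eq, hc.sum_eq]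

lemma sum_sum_eq_one [Fintype Θ] (hμ : μ ∈ stdSimplex ℝ Θ) (hb : IsSplit μ b) :
    ∑ m, ∑ θ, b m θ = 1 := by
  rw [Finset.sum_comm, ← hμ.2]
  exact Finset.sum_congr rfl fun θ _ => hb.sum_eq θ

lemma mix (hb : IsSplit μ b) (hμ : ∀ θ, 0 ≤ μ θ) {κ : ℝ} (hκ : 0 ≤ κ) {τ : M → ℝ}
    (hτ : ∀ m, 0 ≤ τ m) (h1 : κ + ∑ m, τ m = 1) :
    IsSplit μ fun m => κ • b m + τ m • μ where
  nonneg m θ := add_nonneg (mul_nonneg hκ (hb.nonneg m θ)) (mul_nonneg (hτ m) (hμ θ))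
  sum_eq θ := by
    simp only [Pi.add_apply, Pi.smul_apply, smul_eq_mul, Finset.sum_add_distrib, ← Finset.mul_sum,
      ← Finset.sum_mul, hb.sum_eq, ← add_mul, h1, one_mul]

end IsSplit

/-- The joint mass of messages and states when `μ` is the weight vector of states and `ψ θ` the
distribution of messages in state `θ`. -/
def messageMass (μ : Θ → ℝ) (ψ : Θ → M → ℝ) (m : M) (θ : Θ) : ℝ :=
  μ θ * ψ θ m

lemma isSplit_messageMass (hμ : ∀ θ, 0 ≤ μ θ) {ψ : Θ → M → ℝ} (hψ : IsExperiment ψ) :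
    IsSplit μ (messageMass μ ψ) where
  nonneg m θ := mul_nonneg (hμ θ) ((hψ θ).1 m)
  sum_eq θ := by simp only [messageMass, ← Finset.mul_sum, (hψ θ).2, mul_one]

lemma messageMass_normalizeD (hb : IsSplit μ b) (q : M → ℝ) :
    messageMass μ (fun θ => normalizeD (fun m => b m θ) q) = b := by
  ext m θ
  rw [messageMass, ← hb.sum_eq θ]
  exact congrFun (sum_smul_normalizeD (b := fun m => b m θ) (fun m => hb.nonneg m θ) q) m

lemma IsSplit.exists_experiment [Nonempty M] (hb : IsSplit μ b) :
    ∃ ψ : Θ → M → ℝ, IsExperiment ψ ∧ messageMass μ ψ = b := by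
  classical
  obtain ⟨m₀⟩ := ‹Nonempty M›
  exact ⟨fun θ => normalizeD (fun m => b m θ) (Pi.single m₀ 1), fun θ =>
    normalizeD_mem_stdSimplex (fun m => hb.nonneg m θ) (single_mem_stdSimplex ℝ m₀),
    messageMass_normalizeD hb _⟩

omit [Fintype M] in
lemma exists_onPath_representative {m₀ : M} (hm₀ : b m₀ ≠ 0) :
    ∃ r : M → M, (∀ m, b m ≠ 0 → r m = m) ∧ ∀ m, b (r m) ≠ 0 := by
  classical
  refine ⟨fun m => if b m = 0 then m₀ else m, fun m hm => if_neg hm, fun m => ?_⟩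
  dsimp only
  split_ifs with hm
  exacts [hm₀, hm]

omit [Fintype M] in
lemma messageMass_mix (μ : Θ → ℝ) (χ : ℝ) (ψ σ : Θ → M → ℝ) :
    messageMass μ (χ • ψ + (1 - χ) • σ) =
      messageMass (χ • μ) ψ + messageMass ((1 - χ) • μ) σ := by
  ext m θ
  simp only [messageMass, Pi.add_apply, Pi.smul_apply, smul_eq_mul]
  ring

lemma isSplit_unit (hμ : ∀ θ, 0 ≤ μ θ) : IsSplit μ fun _ : Unit => μ where
  nonneg _ θ := hμ θ
  sum_eq _ := by simp only [Finset.univ_unique, Finset.sum_const, Finset.card_singleton, one_smul]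

lemma isCompact_setOf_isSplit (μ : Θ → ℝ) : IsCompact {b : M → Θ → ℝ | IsSplit μ b} := by
  refine (isCompact_Icc (a := 0) (b := fun _ => μ)).of_isClosed_subset ?_
    fun b hb => ⟨hb.nonneg, hb.le⟩
  have h : {b : M → Θ → ℝ | IsSplit μ b} =
      {b | ∀ m θ, 0 ≤ b m θ} ∩ {b | ∀ θ, ∑ m, b m θ = μ θ} :=
    Set.ext fun b => ⟨fun h => ⟨h.1, h.2⟩, fun h => ⟨h.1, h.2⟩⟩
  rw [h]
  refine IsClosed.inter ?_ ?_
  · simp only [Set.ofPred_forall]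
    exact isClosed_iInter fun m => isClosed_iInter fun θ =>
      isClosed_le (by fun_prop) (by fun_prop)
  · simp only [Set.ofPred_forall]
    exact isClosed_iInter fun θ => isClosed_eq (by fun_prop) (by fun_prop)

end Split

section MixedAction

variable {A : Type*} [Fintype A] {u α : A → ℝ} {x y : ℝ}

lemma dotProduct_le_of_support_subset (hα : α ∈ stdSimplex ℝ A)
    (h : Function.support α ⊆ {a | u a ≤ x}) : u ⬝ᵥ α ≤ x := by
  calc u ⬝ᵥ α = ∑ a, u a * α a := rfl
    _ ≤ ∑ a, x * α a := Finset.sum_le_sum fun a _ => by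
        by_cases ha : α a = 0
        · simp only [ha, mul_zero, le_refl]
        · exact mul_le_mul_of_nonneg_right (h ha) (hα.1 a)
    _ = x := by rw [← Finset.mul_sum, hα.2, mul_one]

lemma le_dotProduct_of_support_subset (hα : α ∈ stdSimplex ℝ A)
    (h : Function.support α ⊆ {a | x ≤ u a}) : x ≤ u ⬝ᵥ α := by
  have h' : -u ⬝ᵥ α ≤ -x :=
    dotProduct_le_of_support_subset hα fun a ha => neg_le_neg (show x ≤ u a from h ha)
  rwa [neg_dotProduct, neg_le_neg_iff] at h'

lemma abs_dotProduct_le_norm (hα : α ∈ stdSimplex ℝ A) : |u ⬝ᵥ α| ≤ ‖u‖ :=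
  abs_le.2 ⟨le_dotProduct_of_support_subset hα fun a _ => (abs_le.1 (norm_le_pi_norm u a)).1,
    dotProduct_le_of_support_subset hα fun a _ => (abs_le.1 (norm_le_pi_norm u a)).2⟩

lemma exists_mixed_action {S : Set A} (hle : ∃ a ∈ S, u a ≤ y) (hge : ∃ a ∈ S, y ≤ u a) :
    ∃ α ∈ stdSimplex ℝ A, Function.support α ⊆ S ∧ u ⬝ᵥ α = y := by
  classical
  obtain ⟨a, ha, hay⟩ := hle
  obtain ⟨a', ha', hya'⟩ := hge
  obtain ⟨s, t, hs, ht, hst, rfl⟩ : y ∈ segment ℝ (u a) (u a') := by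
    rw [segment_eq_Icc (hay.trans hya')]
    exact ⟨hay, hya'⟩
  refine ⟨s • Pi.single a 1 + t • Pi.single a' 1,
    convex_stdSimplex ℝ A (single_mem_stdSimplex ℝ a) (single_mem_stdSimplex ℝ a') hs ht hst,
    fun i hi => ?_, ?_⟩
  · by_contra hiS
    have hne : i ≠ a ∧ i ≠ a' := ⟨fun h => hiS (h ▸ ha), fun h => hiS (h ▸ ha')⟩
    simp [hne.1, hne.2] at hi
  · simp only [dotProduct_add, dotProduct_smul, dotProduct_single_one]

end MixedAction

section BestResponse

variable {A Θ : Type*} [Fintype Θ] {uR : A → Θ → ℝ} {μ : Θ → ℝ}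

lemma mem_BRf_iff {a : A} : a ∈ BRf uR μ ↔ ∀ a', (uR a' - uR a) ⬝ᵥ μ ≤ 0 := by
  simp only [sub_dotProduct, sub_nonpos]
  rfl

lemma BRf_nonempty [Finite A] [Nonempty A] (uR : A → Θ → ℝ) (μ : Θ → ℝ) : (BRf uR μ).Nonempty :=
  Finite.exists_max fun a => uR a ⬝ᵥ μ

lemma BRf_smul (uR : A → Θ → ℝ) (μ : Θ → ℝ) {t : ℝ} (ht : 0 < t) :
    BRf uR (t • μ) = BRf uR μ := by
  ext a
  simp only [mem_BRf_iff, dotProduct_smul, smul_nonpos_iff_nonpos_of_pos_left ht]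

lemma BRf_subset_BRf_smul (uR : A → Θ → ℝ) (μ : Θ → ℝ) {t : ℝ} (ht : 0 ≤ t) :
    BRf uR μ ⊆ BRf uR (t • μ) := fun a ha => mem_BRf_iff.2 fun a' => by
  rw [dotProduct_smul]
  exact mul_nonpos_of_nonneg_of_nonpos ht (mem_BRf_iff.1 ha a')

lemma BRf_normalizeD (uR : A → Θ → ℝ) (hμ : ∀ θ, 0 ≤ μ θ) (hμ' : μ ≠ 0) (ν : Θ → ℝ) :
    BRf uR (normalizeD μ ν) = BRf uR μ := by
  have hpos : 0 < ∑ θ, μ θ := Fintype.sum_pos (lt_of_le_of_ne hμ hμ'.symm)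
  rw [← BRf_smul uR (normalizeD μ ν) hpos, sum_smul_normalizeD hμ]

lemma support_subset_BRf_iff {α : A → ℝ} (hα : ∀ a, 0 ≤ α a) :
    Function.support α ⊆ BRf uR μ ↔ ∀ a a', α a * ((uR a' - uR a) ⬝ᵥ μ) ≤ 0 := by
  simp only [Set.subset_def, mem_BRf_iff, Function.mem_support]
  refine forall_congr' fun a => ⟨fun h a' => ?_, fun h ha a' => ?_⟩
  · by_cases ha : α a = 0
    · rw [ha, zero_mul]
    · exact mul_nonpos_of_nonneg_of_nonpos (hα a) (h ha a')
  · exact nonpos_of_mul_nonpos_right (h a') ((hα a).lt_of_ne' ha)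

end BestResponse

section InformationPolicy

variable {A Θ ι : Type*} [Fintype Θ] [Fintype ι] {uR : A → Θ → ℝ} {μ0 : Θ → ℝ}
  {g : Set A → ℝ} {b : ι → Θ → ℝ}

/-- The value of the persuasion problem in which the payoff `g` of a posterior belief depends only
on the receiver's set of best responses to it; `vHatG` and `wHatG` are the cases in which `g` is the
best and the worst sender payoff over that set. -/
noncomputable def persuasionValue (uR : A → Θ → ℝ) (μ0 : Θ → ℝ) (g : Set A → ℝ) : ℝ :=
  sSup ((fun p : ProbabilityMeasure (Belief Θ) =>
    ∫ μ, g (BRf uR (μ : Belief Θ).1) ∂(p : Measure (Belief Θ))) '' IPolF μ0)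

/-- The value of a finite information policy, given by unnormalised posteriors `b i`, when the
payoff of a posterior is `g` of the receiver's set of best responses to it. -/
noncomputable def splitValue (uR : A → Θ → ℝ) (g : Set A → ℝ) (b : ι → Θ → ℝ) : ℝ :=
  ∑ i, (∑ θ, b i θ) * g (BRf uR (b i))

lemma IsSplit.exists_informationPolicy (hμ0 : μ0 ∈ stdSimplex ℝ Θ) (hb : IsSplit μ0 b) :
    ∃ p ∈ IPolF μ0, ∀ f : (Θ → ℝ) → ℝ, ∫ μ, f (μ : Belief Θ).1 ∂(p : Measure (Belief Θ)) =
      ∑ i, (∑ θ, b i θ) * f (normalizeD (b i) μ0) := by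
  have hmass : ∀ i, 0 ≤ ∑ θ, b i θ := fun i => Finset.sum_nonneg fun θ _ => hb.nonneg i θ
  let posterior : ι → Belief Θ := fun i =>
    ⟨normalizeD (b i) μ0, normalizeD_mem_stdSimplex (hb.nonneg i) hμ0⟩
  let P : Measure (Belief Θ) :=
    ∑ i, ENNReal.ofReal (∑ θ, b i θ) • Measure.dirac (posterior i)
  have hP : IsProbabilityMeasure P := ⟨by
    simp only [P, Measure.coe_finsetSum, Finset.sum_apply, Measure.smul_apply, measure_univ,
      smul_eq_mul, mul_one]
    rw [← ENNReal.ofReal_sum_of_nonneg fun i _ => hmass i, hb.sum_sum_eq_one hμ0,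
      ENNReal.ofReal_one]⟩
  have hint : ∀ f : (Θ → ℝ) → ℝ, ∫ μ, f (μ : Belief Θ).1 ∂P =
      ∑ i, (∑ θ, b i θ) * f (normalizeD (b i) μ0) := fun f => by
    rw [integral_finsetSum_measure fun i _ =>
      (integrable_dirac (by finiteness)).smul_measure ENNReal.ofReal_ne_top]
    simp only [integral_smul_measure, integral_dirac, ENNReal.toReal_ofReal (hmass _), smul_eq_mul,
      posterior]
  refine ⟨⟨P, hP⟩, fun θ => (hint fun μ => μ θ).trans ?_, hint⟩
  rw [← hb.sum_eq θ]
  exact Finset.sum_congr rfl fun i _ => congrFun (sum_smul_normalizeD (hb.nonneg i) μ0) θ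

lemma splitValue_eq_sum_normalizeD (hb : ∀ i, 0 ≤ b i) (ν : Θ → ℝ) :
    splitValue uR g b = ∑ i, (∑ θ, b i θ) * g (BRf uR (normalizeD (b i) ν)) := by
  refine Finset.sum_congr rfl fun i _ => ?_
  by_cases h : b i = 0
  · simp only [h, Pi.zero_apply, Finset.sum_const_zero, zero_mul]
  · rw [BRf_normalizeD uR (hb i) h]

variable (uR μ0 g) in
lemma bddAbove_integral_BRf [Finite A] :
    BddAbove ((fun p : ProbabilityMeasure (Belief Θ) =>
      ∫ μ, g (BRf uR (μ : Belief Θ).1) ∂(p : Measure (Belief Θ))) '' IPolF μ0) := by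
  obtain ⟨S, hS⟩ := Finite.exists_max fun S => ‖g S‖
  refine ⟨‖g S‖, ?_⟩
  rintro _ ⟨p, -, rfl⟩
  have h := norm_integral_le_of_norm_le_const (μ := (p : Measure (Belief Θ)))
    (f := fun μ : Belief Θ => g (BRf uR μ.1)) (.of_forall fun μ => hS _)
  rw [probReal_univ, mul_one] at h
  exact (le_abs_self _).trans h

lemma IsSplit.splitValue_le_persuasionValue [Finite A] (hμ0 : μ0 ∈ stdSimplex ℝ Θ)
    (hb : IsSplit μ0 b) : splitValue uR g b ≤ persuasionValue uR μ0 g := by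
  obtain ⟨p, hp, hint⟩ := hb.exists_informationPolicy hμ0
  refine le_csSup (bddAbove_integral_BRf uR μ0 g) ⟨p, hp, ?_⟩
  rw [splitValue_eq_sum_normalizeD hb.nonneg μ0]
  exact hint fun μ => g (BRf uR μ)

lemma persuasionValue_le (hμ0 : μ0 ∈ stdSimplex ℝ Θ) {x : ℝ}
    (h : ∀ p ∈ IPolF μ0, ∫ μ, g (BRf uR (μ : Belief Θ).1) ∂(p : Measure (Belief Θ)) ≤ x) :
    persuasionValue uR μ0 g ≤ x := by
  obtain ⟨p, hp, -⟩ := (isSplit_unit hμ0.1).exists_informationPolicy hμ0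
  refine csSup_le ⟨_, p, hp, rfl⟩ ?_
  rintro _ ⟨p, hp, rfl⟩
  exact h p hp

end InformationPolicy

section Cell

variable {A Θ : Type*} [Fintype Θ]

/-- The beliefs to which the receiver's set of best responses is exactly `S`. -/
def cell (uR : A → Θ → ℝ) (S : Set A) : Set (Belief Θ) :=
  {μ | BRf uR μ.1 = S}

/-- The unnormalised barycentre of the restriction of `q` to the cell of `S`: pooling all posteriors
with the same best responses turns an information policy into a finite one. -/
noncomputable def cellMass (uR : A → Θ → ℝ) (q : Measure (Belief Θ)) (S : Set A) (θ : Θ) : ℝ :=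
  ∫ μ in cell uR S, μ.1 θ ∂q

variable {uR : A → Θ → ℝ} {q : Measure (Belief Θ)} {S : Set A} {μ0 : Θ → ℝ}

lemma measurableSet_cell [Finite A] (uR : A → Θ → ℝ) (S : Set A) : MeasurableSet (cell uR S) := by
  have hmem : ∀ a, MeasurableSet {μ : Belief Θ | a ∈ BRf uR μ.1} := fun a => by
    simp only [mem_BRf_iff, Set.ofPred_forall]
    exact (isClosed_iInter fun a' => isClosed_le (by fun_prop) continuous_const).measurableSet
  simp only [cell, Set.ext_iff, Set.ofPred_forall]
  exact .iInter fun a => (hmem a).iff (.const (a ∈ S))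

lemma integrable_dotProduct [IsFiniteMeasure q] (x : Θ → ℝ) :
    Integrable (fun μ : Belief Θ => x ⬝ᵥ μ.1) q :=
  have : CompactSpace (Belief Θ) := isCompact_iff_compactSpace.1 (isCompact_stdSimplex ℝ Θ)
  Continuous.integrable_of_hasCompactSupport (by fun_prop) (HasCompactSupport.of_compactSpace _)

lemma integrable_belief_apply [IsFiniteMeasure q] (θ : Θ) :
    Integrable (fun μ : Belief Θ => μ.1 θ) q := by
  classical
  simpa only [single_one_dotProduct] using integrable_dotProduct (q := q) (Pi.single θ 1)

lemma dotProduct_cellMass [IsFiniteMeasure q] (x : Θ → ℝ) :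
    x ⬝ᵥ cellMass uR q S = ∫ μ in cell uR S, x ⬝ᵥ μ.1 ∂q := by
  simp only [dotProduct, cellMass]
  rw [integral_finsetSum _ fun θ _ => ((integrable_belief_apply θ).const_mul _).integrableOn]
  simp only [integral_const_mul]

lemma sum_cellMass [IsFiniteMeasure q] : ∑ θ, cellMass uR q S θ = q.real (cell uR S) := by
  rw [← one_dotProduct, dotProduct_cellMass]
  have h : ∀ μ : Belief Θ, 1 ⬝ᵥ μ.1 = 1 := fun μ => (one_dotProduct _).trans μ.2.2
  simp only [h, setIntegral_const, smul_eq_mul, mul_one]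

lemma cellMass_nonneg (θ : Θ) : 0 ≤ cellMass uR q S θ :=
  integral_nonneg fun μ => μ.2.1 θ

lemma integral_eq_sum_setIntegral_cell [Fintype A] {f : Belief Θ → ℝ}
    (hf : ∀ S, IntegrableOn f (cell uR S) q) :
    ∫ μ, f μ ∂q = ∑ S, ∫ μ in cell uR S, f μ ∂q := by
  rw [← integral_iUnion_fintype (measurableSet_cell uR) (fun S T hST => ?_) hf]
  · rw [Set.iUnion_eq_univ_iff.2 fun μ => ⟨BRf uR μ.1, rfl⟩, Measure.restrict_univ]
  · exact Set.disjoint_left.2 fun μ hS hT => hST (hS.symm.trans hT)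

lemma isSplit_cellMass [Fintype A] (uR : A → Θ → ℝ) {p : ProbabilityMeasure (Belief Θ)}
    (hp : p ∈ IPolF μ0) : IsSplit μ0 (cellMass uR (p : Measure (Belief Θ))) where
  nonneg _ := cellMass_nonneg
  sum_eq θ := by
    rw [← hp θ]
    exact (integral_eq_sum_setIntegral_cell fun S => (integrable_belief_apply θ).integrableOn).symm

lemma dotProduct_sub_pos_of_mem_BRf_of_notMem {μ : Θ → ℝ} {a a₀ : A} (ha₀ : a₀ ∈ BRf uR μ)
    (ha : a ∉ BRf uR μ) : 0 < (uR a₀ - uR a) ⬝ᵥ μ := by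
  simp only [mem_BRf_iff, not_forall, not_le] at ha
  obtain ⟨a', ha'⟩ := ha
  have h := mem_BRf_iff.1 ha₀ a'
  rw [sub_dotProduct] at *
  linarith

lemma BRf_cellMass [Finite A] [Nonempty A] [IsFiniteMeasure q] (hS : q (cell uR S) ≠ 0) :
    BRf uR (cellMass uR q S) = S := by
  obtain ⟨ν, hν : BRf uR ν.1 = S⟩ := nonempty_of_measure_ne_zero hS
  obtain ⟨a₀, ha₀⟩ := hν ▸ BRf_nonempty uR ν.1
  ext a
  refine ⟨fun ha => ?_, fun ha => mem_BRf_iff.2 fun a' => ?_⟩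
  · by_contra haS
    have hpos : ∀ μ ∈ cell uR S, 0 < (uR a₀ - uR a) ⬝ᵥ μ.1 := fun μ hμ =>
      dotProduct_sub_pos_of_mem_BRf_of_notMem (hμ ▸ ha₀ :) (hμ ▸ haS :)
    have hint : 0 < ∫ μ in cell uR S, (uR a₀ - uR a) ⬝ᵥ μ.1 ∂q := by
      rw [setIntegral_pos_iff_support_of_nonneg_ae _ (integrable_dotProduct _).integrableOn,
        Set.inter_eq_right.2 fun μ hμ => Function.mem_support.2 (hpos μ hμ).ne']
      · exact pos_iff_ne_zero.2 hS
      · exact (ae_restrict_mem (measurableSet_cell uR S)).mono fun μ hμ => (hpos μ hμ).le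
    rw [← dotProduct_cellMass] at hint
    exact hint.not_ge (mem_BRf_iff.1 ha a₀)
  · rw [dotProduct_cellMass]
    exact setIntegral_nonpos (measurableSet_cell uR S) fun μ hμ =>
      mem_BRf_iff.1 (hμ ▸ ha : a ∈ BRf uR μ.1) a'

lemma splitValue_cellMass [Fintype A] [Nonempty A] [IsFiniteMeasure q] (g : Set A → ℝ) :
    splitValue uR g (cellMass uR q) = ∫ μ, g (BRf uR μ.1) ∂q := by
  have hconst : ∀ S, Set.EqOn (fun μ : Belief Θ => g (BRf uR μ.1)) (fun _ => g S) (cell uR S) :=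
    fun S μ hμ => congrArg g hμ
  rw [integral_eq_sum_setIntegral_cell (uR := uR) fun S =>
    (integrable_const (g S)).integrableOn.congr_fun (hconst S).symm (measurableSet_cell uR S)]
  refine Finset.sum_congr rfl fun S _ => ?_
  rw [setIntegral_congr_fun (measurableSet_cell uR S) (hconst S), setIntegral_const, smul_eq_mul,
    sum_cellMass]
  by_cases hS : q (cell uR S) = 0
  · rw [measureReal_def, hS, ENNReal.toReal_zero, zero_mul, zero_mul]
  · rw [BRf_cellMass hS]

end Cell

section BasicSolution

variable {ι E : Type*} [Fintype ι] [AddCommGroup E] [Module ℝ E] {x : ι → E} {w g : ι → ℝ}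

lemma exists_dependency_of_not_linearIndepOn {s : Set ι} (h : ¬ LinearIndepOn ℝ x s) :
    ∃ g : ι → ℝ, ∑ i, g i • x i = 0 ∧ Function.support g ⊆ s ∧ g ≠ 0 := by
  simp only [linearIndepOn_iff, not_forall] at h
  obtain ⟨l, hls, hl, hl0⟩ := h
  refine ⟨l, ?_, ?_, fun h0 => hl0 (DFunLike.coe_injective h0)⟩
  · rwa [Finsupp.linearCombination_apply, l.sum_fintype _ fun i => zero_smul ℝ (x i)] at hl
  · simpa only [Finsupp.fun_support_eq] using (Finsupp.mem_supported ℝ l).1 hls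

lemma exists_improving_direction {c : ι → ℝ}
    (hc : ∀ g : ι → ℝ, (∀ i, 0 ≤ g i) → ∑ i, g i • x i = 0 → ∑ i, g i * c i ≤ 0)
    (hgx : ∑ i, g i • x i = 0) (hg : g ≠ 0) :
    ∃ h : ι → ℝ, (h = g ∨ h = -g) ∧ 0 ≤ ∑ i, h i * c i ∧ ∃ i, h i < 0 := by
  by_cases hsum : 0 ≤ ∑ i, g i * c i
  · by_cases hneg : ∃ i, g i < 0
    · exact ⟨g, .inl rfl, hsum, hneg⟩
    · push Not at hneg
      obtain ⟨i, hi⟩ := Function.ne_iff.1 hg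
      refine ⟨-g, .inr rfl, ?_, i, neg_neg_of_pos ((hneg i).lt_of_ne' hi)⟩
      simpa only [Pi.neg_apply, neg_mul, Finset.sum_neg_distrib, neg_nonneg] using hc g hneg hgx
  · refine ⟨-g, .inr rfl, ?_, by_contra fun hpos => hsum ?_⟩
    · simp only [Pi.neg_apply, neg_mul, Finset.sum_neg_distrib]
      linarith
    · push Not at hpos
      simpa only [Pi.neg_apply, neg_mul, neg_smul, Finset.sum_neg_distrib, hgx, neg_zero,
        forall_const, neg_nonpos] using hc (-g) hpos

omit [Fintype ι] in
lemma exists_smaller_support [Finite ι] (hw : ∀ i, 0 ≤ w i)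
    (hgw : Function.support g ⊆ Function.support w) (hg : ∃ i, g i < 0) :
    ∃ t, 0 ≤ t ∧ (∀ i, 0 ≤ w i + t * g i) ∧
      Function.support (fun i => w i + t * g i) ⊂ Function.support w := by
  obtain ⟨k, hk, hmin⟩ : ∃ k, g k < 0 ∧ ∀ i, g i < 0 → w k / -g k ≤ w i / -g i :=
    Set.exists_min_image {i | g i < 0} (fun i => w i / -g i) (Set.toFinite _) hg
  have hcancel : w k + w k / -g k * g k = 0 := by
    rw [div_neg, neg_mul, div_mul_cancel₀ _ hk.ne, add_neg_cancel]
  have ht : 0 ≤ w k / -g k := div_nonneg (hw k) (neg_nonneg.2 hk.le)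
  refine ⟨w k / -g k, ht, fun i => ?_, Set.ssubset_iff_of_subset (fun i hi => ?_) |>.2
    ⟨k, hgw hk.ne, fun h => h hcancel⟩⟩
  · rcases lt_or_ge (g i) 0 with hi | hi
    · have h := (le_div_iff₀ (neg_pos.2 hi)).1 (hmin i hi)
      linarith
    · exact add_nonneg (hw i) (mul_nonneg ht hi)
  · by_contra hwi
    have hgi : g i = 0 := by_contra fun h => hwi (hgw h)
    simp only [Function.mem_support, hgi, mul_zero, add_zero] at hi
    exact hwi hi

/-- The fundamental theorem of linear programming: a feasible point is dominated by a basic one. -/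
lemma exists_basic_solution (x : ι → E) (c : ι → ℝ) (hw : ∀ i, 0 ≤ w i)
    (hc : ∀ g : ι → ℝ, (∀ i, 0 ≤ g i) → ∑ i, g i • x i = 0 → ∑ i, g i * c i ≤ 0) :
    ∃ w' : ι → ℝ, (∀ i, 0 ≤ w' i) ∧ ∑ i, w' i • x i = ∑ i, w i • x i ∧
      ∑ i, w i * c i ≤ ∑ i, w' i * c i ∧ LinearIndepOn ℝ x (Function.support w') := by
  obtain ⟨w', ⟨hw', hx, hle⟩, hmin⟩ := exists_minimalFor_of_wellFoundedLT
    (fun w' : ι → ℝ => (∀ i, 0 ≤ w' i) ∧ ∑ i, w' i • x i = ∑ i, w i • x i ∧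
      ∑ i, w i * c i ≤ ∑ i, w' i * c i) Function.support ⟨w, hw, rfl, le_rfl⟩
  refine ⟨w', hw', hx, hle, by_contra fun hdep => ?_⟩
  obtain ⟨g, hgx, hgw, hg0⟩ := exists_dependency_of_not_linearIndepOn hdep
  obtain ⟨h, hh, hhc, hneg⟩ := exists_improving_direction hc hgx hg0
  have hhx : ∑ i, h i • x i = 0 := by
    rcases hh with rfl | rfl
    · exact hgx
    · simp only [Pi.neg_apply, neg_smul, Finset.sum_neg_distrib, hgx, neg_zero]
  have hhw : Function.support h ⊆ Function.support w' := by
    rcases hh with rfl | rfl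
    · exact hgw
    · rwa [Function.support_neg]
  obtain ⟨t, ht, hnn, hss⟩ := exists_smaller_support hw' hhw hneg
  refine hss.not_subset (hmin ⟨hnn, ?_, ?_⟩ hss.subset)
  · simp only [add_smul, mul_smul, Finset.sum_add_distrib, ← Finset.smul_sum, hhx, smul_zero,
      add_zero, hx]
  · simp only [add_mul, mul_assoc, Finset.sum_add_distrib, ← Finset.mul_sum]
    exact hle.trans (le_add_of_nonneg_right (mul_nonneg ht hhc))

end BasicSolution

section FewMessages

variable {A Θ M ι : Type*} [Fintype Θ] [Fintype M] [Fintype ι] {uR : A → Θ → ℝ} {μ0 : Θ → ℝ}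
  {b : ι → Θ → ℝ} {g : Set A → ℝ}

lemma IsSplit.exists_reindex (hb : IsSplit μ0 b) {s : Set ι} (hs : Function.support b ⊆ s)
    (e : s ↪ M) : ∃ b' : M → Θ → ℝ, IsSplit μ0 b' ∧ splitValue uR g b' = splitValue uR g b := by
  classical
  have hext : ∀ F : (Θ → ℝ) → ℝ, F 0 = 0 →
      ∑ m, F (Function.extend e (fun i : s => b i) 0 m) = ∑ i, F (b i) := fun F hF => by
    have hsub : ∑ i : s, F (b i) = ∑ m, F (Function.extend e (fun i : s => b i) 0 m) :=
      Fintype.sum_of_injective e e.injective _ _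
        (fun m hm => by rw [Function.extend_apply' _ _ _ hm, Pi.zero_apply, hF])
        (fun i => by rw [e.injective.extend_apply])
    have hsub' : ∑ i : s, F (b i) = ∑ i, F (b i) :=
      Fintype.sum_of_injective _ Subtype.val_injective _ _
        (fun i hi => by
          have hbi : b i = 0 := by_contra fun h => hi ⟨⟨i, hs h⟩, rfl⟩
          rw [hbi, hF])
        (fun _ => rfl)
    exact hsub.symm.trans hsub'
  refine ⟨Function.extend e (fun i : s => b i) 0, ⟨fun m => ?_, fun θ => ?_⟩, ?_⟩
  · by_cases hm : ∃ i, e i = m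
    · obtain ⟨i, rfl⟩ := hm
      rw [e.injective.extend_apply]
      exact hb.nonneg i
    · rw [Function.extend_apply' _ _ _ hm]
      exact fun _ => le_rfl
  · rw [hext fun v => v θ, hb.sum_eq]
    rfl
  · exact hext (fun v => (∑ θ, v θ) * g (BRf uR v)) (by simp)

lemma splitValue_smul {w : ι → ℝ} (hw : ∀ i, 0 ≤ w i) :
    splitValue uR g (fun i => w i • b i) = ∑ i, w i * ((∑ θ, b i θ) * g (BRf uR (b i))) := by
  refine Finset.sum_congr rfl fun i _ => ?_
  rw [← mul_assoc, Finset.mul_sum]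
  rcases (hw i).eq_or_lt with hi | hi
  · simp [← hi]
  · rw [BRf_smul uR (b i) hi]
    rfl

lemma IsSplit.exists_of_card_le (hb : IsSplit μ0 b) (hcard : Fintype.card Θ ≤ Fintype.card M) :
    ∃ b' : M → Θ → ℝ, IsSplit μ0 b' ∧ splitValue uR g b ≤ splitValue uR g b' := by
  classical
  obtain ⟨w, hw, hwb, hle, hind⟩ := exists_basic_solution b
    (fun i => (∑ θ, b i θ) * g (BRf uR (b i))) (w := 1) (fun _ => zero_le_one) fun h hh hhb => by
      refine (Finset.sum_eq_zero fun i _ => ?_).le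
      have hmass : ∀ θ, h i * b i θ = 0 := fun θ =>
        (Finset.sum_eq_zero_iff_of_nonneg fun j _ => mul_nonneg (hh j) (hb.nonneg j θ)).1
          (by simpa using congrFun hhb θ) i (Finset.mem_univ i)
      rw [← mul_assoc, Finset.mul_sum]
      simp only [hmass, Finset.sum_const_zero, zero_mul]
  have hsplit : IsSplit μ0 fun i => w i • b i :=
    ⟨fun i θ => mul_nonneg (hw i) (hb.nonneg i θ), fun θ => by
      simpa [hb.sum_eq] using congrFun hwb θ⟩
  have hcard' : Fintype.card (Function.support w) ≤ Fintype.card M :=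
    hind.linearIndependent.fintype_card_le_finrank.trans (by simpa using hcard)
  obtain ⟨e⟩ := Function.Embedding.nonempty_of_card_le hcard'
  obtain ⟨b', hb', hval⟩ := hsplit.exists_reindex (uR := uR) (g := g) (s := Function.support w)
    (Function.support_smul_subset_left w b) e
  refine ⟨b', hb', ?_⟩
  rw [hval, splitValue_smul hw]
  simpa only [splitValue, Pi.one_apply, one_mul] using hle

lemma exists_split_integral_le_splitValue [Finite A] [Nonempty A] (uR : A → Θ → ℝ)
    (g : Set A → ℝ) (hcard : Fintype.card Θ ≤ Fintype.card M)
    {p : ProbabilityMeasure (Belief Θ)} (hp : p ∈ IPolF μ0) :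
    ∃ b : M → Θ → ℝ, IsSplit μ0 b ∧
      ∫ μ, g (BRf uR (μ : Belief Θ).1) ∂(p : Measure (Belief Θ)) ≤ splitValue uR g b := by
  cases nonempty_fintype A
  rw [← splitValue_cellMass]
  exact (isSplit_cellMass uR hp).exists_of_card_le hcard

lemma persuasionValue_le_of_forall_splitValue_le [Finite A] [Nonempty A] {uR : A → Θ → ℝ}
    {g : Set A → ℝ} (hμ0 : μ0 ∈ stdSimplex ℝ Θ) (hcard : Fintype.card Θ ≤ Fintype.card M) {x : ℝ}
    (h : ∀ b : M → Θ → ℝ, IsSplit μ0 b → splitValue uR g b ≤ x) :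
    persuasionValue uR μ0 g ≤ x :=
  persuasionValue_le hμ0 fun _ hp =>
    let ⟨b, hb, hle⟩ := exists_split_integral_le_splitValue uR g hcard hp
    hle.trans (h b hb)

end FewMessages

section Outcome

variable {A Θ M : Type*} [Fintype A] [Fintype Θ] [Fintype M]

/-- An outcome of the game after some experiment, up to regret `η` of the receiver: `d m θ` and
`c m θ` are the masses with which message `m` is sent in state `θ` by the experiment and by the
influencing sender, `α m` is the receiver's mixed reply, and `y` is the best payoff that any message
yields to the sender. Bayes' rule is implicit, beliefs being proportional to `(d + c) m`. All
conditions are polynomial weak inequalities, so outcomes form a compact set. -/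
structure IsOutcome (uS : A → ℝ) (uR : A → Θ → ℝ) (μ0 : Θ → ℝ) (χ η : ℝ)
    (d c : M → Θ → ℝ) (α : M → A → ℝ) (y : ℝ) : Prop where
  truthful : IsSplit (χ • μ0) d
  influenced : IsSplit ((1 - χ) • μ0) c
  strategy : ∀ m, α m ∈ stdSimplex ℝ A
  regret_le : ∀ m a a', α m a * ((uR a' - uR a) ⬝ᵥ (d + c) m) ≤ η
  value_le : ∀ m θ, d m θ * (uS ⬝ᵥ α m) ≤ d m θ * y
  value_eq : ∀ m θ, c m θ * (uS ⬝ᵥ α m) = c m θ * y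
  abs_value_le : |y| ≤ ‖uS‖

/-- The sender's expected payoff when message `m` and state `θ` have joint mass `b m θ` and the
receiver replies with the mixed action `α m`. -/
def payoff (uS : A → ℝ) (b : M → Θ → ℝ) (α : M → A → ℝ) : ℝ :=
  ∑ m, (∑ θ, b m θ) * (uS ⬝ᵥ α m)

variable {uS : A → ℝ} {uR : A → Θ → ℝ} {μ0 : Θ → ℝ} {χ η y : ℝ} {d c : M → Θ → ℝ} {α : M → A → ℝ}

lemma continuous_payoff (uS : A → ℝ) :
    Continuous fun z : (M → Θ → ℝ) × (M → Θ → ℝ) × (M → A → ℝ) × ℝ =>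
      payoff uS (z.1 + z.2.1) z.2.2.1 := by
  unfold payoff
  fun_prop

namespace IsOutcome

lemma isSplit (h : IsOutcome uS uR μ0 χ η d c α y) : IsSplit μ0 (d + c) := by
  simpa only [← add_smul, add_sub_cancel, one_smul] using h.truthful.add h.influenced

lemma support_subset_BRf (h : IsOutcome uS uR μ0 χ 0 d c α y) (m : M) :
    Function.support (α m) ⊆ BRf uR ((d + c) m) :=
  (support_subset_BRf_iff (h.strategy m).1).2 (h.regret_le m)

end IsOutcome

/-- The outcomes `(d, c, α, y)` up to regret `η`, as a subset of a finite-dimensional space. -/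
def outcomes (M : Type*) [Fintype M] (uS : A → ℝ) (uR : A → Θ → ℝ) (μ0 : Θ → ℝ) (χ η : ℝ) :
    Set ((M → Θ → ℝ) × (M → Θ → ℝ) × (M → A → ℝ) × ℝ) :=
  {z | IsOutcome uS uR μ0 χ η z.1 z.2.1 z.2.2.1 z.2.2.2}

variable (M uS uR μ0 χ η) in
lemma isCompact_outcomes : IsCompact (outcomes M uS uR μ0 χ η) := by
  have hcompact := (isCompact_setOf_isSplit (M := M) (χ • μ0)).prod
    ((isCompact_setOf_isSplit (M := M) ((1 - χ) • μ0)).prod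
      ((isCompact_univ_pi fun _ : M => isCompact_stdSimplex ℝ A).prod
        (isCompact_Icc (a := -‖uS‖) (b := ‖uS‖))))
  have hregret : IsClosed {z : (M → Θ → ℝ) × (M → Θ → ℝ) × (M → A → ℝ) × ℝ |
      ∀ m a a', z.2.2.1 m a * ((uR a' - uR a) ⬝ᵥ (z.1 + z.2.1) m) ≤ η} := by
    simp only [Set.ofPred_forall]
    exact isClosed_iInter fun m => isClosed_iInter fun a => isClosed_iInter fun a' =>
      isClosed_le (by fun_prop) continuous_const
  have hle : IsClosed {z : (M → Θ → ℝ) × (M → Θ → ℝ) × (M → A → ℝ) × ℝ |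
      ∀ m θ, z.1 m θ * (uS ⬝ᵥ z.2.2.1 m) ≤ z.1 m θ * z.2.2.2} := by
    simp only [Set.ofPred_forall]
    exact isClosed_iInter fun m => isClosed_iInter fun θ => isClosed_le (by fun_prop) (by fun_prop)
  have heq : IsClosed {z : (M → Θ → ℝ) × (M → Θ → ℝ) × (M → A → ℝ) × ℝ |
      ∀ m θ, z.2.1 m θ * (uS ⬝ᵥ z.2.2.1 m) = z.2.1 m θ * z.2.2.2} := by
    simp only [Set.ofPred_forall]
    exact isClosed_iInter fun m => isClosed_iInter fun θ => isClosed_eq (by fun_prop) (by fun_prop)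
  convert (hcompact.inter_right hregret).inter_right (hle.inter heq)
  exact Set.ext fun z => ⟨fun h => ⟨⟨⟨h.truthful, h.influenced, fun m _ => h.strategy m,
    abs_le.1 h.abs_value_le⟩, h.regret_le⟩, h.value_le, h.value_eq⟩,
    fun ⟨⟨⟨hd, hc, hα, hy⟩, hr⟩, hle, heq⟩ =>
      ⟨hd, hc, fun m => hα m trivial, hr, hle, heq, abs_le.2 hy⟩⟩

lemma outcomes_mono {η η' : ℝ} (h : η ≤ η') :
    outcomes M uS uR μ0 χ η ⊆ outcomes M uS uR μ0 χ η' :=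
  fun _ hz => { hz with regret_le := fun m a a' => (hz.regret_le m a a').trans h }

lemma mem_outcomes_zero_of_forall_pos {z : (M → Θ → ℝ) × (M → Θ → ℝ) × (M → A → ℝ) × ℝ}
    (h : ∀ η > 0, z ∈ outcomes M uS uR μ0 χ η) : z ∈ outcomes M uS uR μ0 χ 0 :=
  { h 1 one_pos with
    regret_le := fun m a a' => le_of_forall_pos_le_add fun η hη => by
      simpa only [zero_add] using (h η hη).regret_le m a a' }

lemma outcomes_zero_inter_nonempty {C : Set ((M → Θ → ℝ) × (M → Θ → ℝ) × (M → A → ℝ) × ℝ)}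
    (hC : IsClosed C) (h : ∀ η > 0, (outcomes M uS uR μ0 χ η ∩ C).Nonempty) :
    (outcomes M uS uR μ0 χ 0 ∩ C).Nonempty := by
  have hcompact : ∀ η, IsCompact (outcomes M uS uR μ0 χ η ∩ C) :=
    fun η => (isCompact_outcomes M uS uR μ0 χ η).inter_right hC
  obtain ⟨z, hz⟩ := IsCompact.nonempty_iInter_of_directed_nonempty_isCompact_isClosed
    (fun η : Set.Ioi (0 : ℝ) => outcomes M uS uR μ0 χ η ∩ C)
    (fun η η' => ⟨η ⊓ η', Set.inter_subset_inter_left C (outcomes_mono inf_le_left),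
      Set.inter_subset_inter_left C (outcomes_mono inf_le_right)⟩)
    (fun η => h η η.2) (fun η => hcompact η) fun η => (hcompact η).isClosed
  rw [Set.mem_iInter] at hz
  exact ⟨z, mem_outcomes_zero_of_forall_pos fun η hη => (hz ⟨η, hη⟩).1,
    (hz ⟨1, Set.mem_Ioi.2 one_pos⟩).2⟩

end Outcome

section ContinuationEquilibrium

variable {A Θ M : Type*} [Fintype A] [Fintype Θ] [Fintype M]

/-- The equilibrium conditions of the subgame that follows the choice of the experiment `ψ`, for an
influencing strategy `σ`, a receiver strategy `α` and a belief system `β`. -/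
structure IsContinuationEq (uS : A → ℝ) (uR : A → Θ → ℝ) (μ0 : Θ → ℝ) (χ : ℝ)
    (ψ σ : Θ → M → ℝ) (α : M → A → ℝ) (β : M → Θ → ℝ) : Prop where
  influencing : IsExperiment σ
  strategy : ∀ m, α m ∈ stdSimplex ℝ A
  belief : ∀ m, β m ∈ stdSimplex ℝ Θ
  best_response : ∀ m, Function.support (α m) ⊆ BRf uR (β m)
  bayes : ∀ m θ, β m θ * ∑ θ', messageMass μ0 (χ • ψ + (1 - χ) • σ) m θ' =
    messageMass μ0 (χ • ψ + (1 - χ) • σ) m θ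
  optimal : ∀ θ m, σ θ m ≠ 0 → ∀ m', uS ⬝ᵥ α m' ≤ uS ⬝ᵥ α m

/-- The sender's payoffs in the equilibria of the subgame after the experiment `ψ`. -/
def continuationPayoffs (uS : A → ℝ) (uR : A → Θ → ℝ) (μ0 : Θ → ℝ) (χ : ℝ) (ψ : Θ → M → ℝ) :
    Set ℝ :=
  {s | ∃ σ α β, IsContinuationEq uS uR μ0 χ ψ σ α β ∧
    s = payoff uS (messageMass μ0 (χ • ψ + (1 - χ) • σ)) α}

variable {uS : A → ℝ} {uR : A → Θ → ℝ} {μ0 : Θ → ℝ} {χ : ℝ}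

lemma chiValue_eq_payoff (uS : A → ℝ) (μ0 : Θ → ℝ) (χ : ℝ) (σ : Θ → (Θ → M → ℝ) → M → ℝ)
    (α : M → (Θ → M → ℝ) → A → ℝ) (ψ : Θ → M → ℝ) :
    chiValue uS μ0 χ σ α ψ =
      payoff uS (messageMass μ0 (χ • ψ + (1 - χ) • fun θ => σ θ ψ)) fun m => α m ψ := by
  simp only [chiValue, payoff, Finset.mul_sum, Finset.sum_mul]
  rw [Finset.sum_comm]
  exact Finset.sum_congr rfl fun m _ => Finset.sum_congr rfl fun θ _ => by
    rw [← Finset.mul_sum, ← Finset.mul_sum, ← mul_assoc]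
    rfl

lemma isChiPBE_iff {ψ : Θ → M → ℝ} {σ : Θ → (Θ → M → ℝ) → M → ℝ}
    {α : M → (Θ → M → ℝ) → A → ℝ} {β : M → (Θ → M → ℝ) → Θ → ℝ} :
    IsChiPBE uS uR μ0 χ ψ σ α β ↔ IsExperiment ψ ∧
      (∀ ψ', IsExperiment ψ' → IsContinuationEq uS uR μ0 χ ψ'
        (fun θ => σ θ ψ') (fun m => α m ψ') (fun m => β m ψ')) ∧
      ∀ ψ', IsExperiment ψ' → chiValue uS μ0 χ σ α ψ' ≤ chiValue uS μ0 χ σ α ψ :=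
  ⟨fun ⟨hψ, hσ, hα, hβ, hopt, hbr, hbayes, hinf⟩ => ⟨hψ, fun ψ' hψ' => ⟨hσ ψ' hψ', hα ψ' hψ',
      hβ ψ' hψ', hbr ψ' hψ', hbayes ψ' hψ', hinf ψ' hψ'⟩, hopt⟩,
    fun ⟨hψ, hcont, hopt⟩ => ⟨hψ, fun ψ' hψ' => (hcont ψ' hψ').influencing,
      fun ψ' hψ' => (hcont ψ' hψ').strategy, fun ψ' hψ' => (hcont ψ' hψ').belief, hopt,
      fun ψ' hψ' => (hcont ψ' hψ').best_response, fun ψ' hψ' => (hcont ψ' hψ').bayes,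
      fun ψ' hψ' => (hcont ψ' hψ').optimal⟩⟩

lemma mem_chiPBEPayoffs_iff {s : ℝ} :
    s ∈ chiPBEPayoffs A M uS uR μ0 χ ↔
      ∃ ψ : Θ → M → ℝ, IsExperiment ψ ∧ s ∈ continuationPayoffs uS uR μ0 χ ψ ∧
        ∀ ψ' : Θ → M → ℝ, IsExperiment ψ' →
          ∃ s' ∈ continuationPayoffs uS uR μ0 χ ψ', s' ≤ s := by
  classical
  constructor
  · rintro ⟨ψ, σ, α, β, h, rfl⟩
    obtain ⟨hψ, hcont, hopt⟩ := isChiPBE_iff.1 h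
    exact ⟨ψ, hψ, ⟨_, _, _, hcont ψ hψ, chiValue_eq_payoff ..⟩, fun ψ' hψ' =>
      ⟨_, ⟨_, _, _, hcont ψ' hψ', chiValue_eq_payoff ..⟩, hopt ψ' hψ'⟩⟩
  · rintro ⟨ψ, hψ, hs, hdev⟩
    choose! r hr hrle using hdev
    let s' := Function.update r ψ s
    have hs'ψ : s' ψ = s := Function.update_self ..
    have hs' : ∀ ψ', IsExperiment ψ' →
        s' ψ' ∈ continuationPayoffs uS uR μ0 χ ψ' ∧ s' ψ' ≤ s := fun ψ' hψ' => by
      by_cases heq : ψ' = ψ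
      · rw [heq, hs'ψ]
        exact ⟨hs, le_rfl⟩
      · rw [show s' ψ' = r ψ' from Function.update_of_ne heq ..]
        exact ⟨hr ψ' hψ', hrle ψ' hψ'⟩
    choose! σ α β hcont hpay using fun ψ' hψ' => (hs' ψ' hψ').1
    have hval : ∀ ψ', IsExperiment ψ' →
        chiValue uS μ0 χ (fun θ ψ' => σ ψ' θ) (fun m ψ' => α ψ' m) ψ' = s' ψ' := fun ψ' hψ' =>
      (chiValue_eq_payoff ..).trans (hpay ψ' hψ').symm
    refine ⟨ψ, fun θ ψ' => σ ψ' θ, fun m ψ' => α ψ' m, fun m ψ' => β ψ' m,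
      isChiPBE_iff.2 ⟨hψ, hcont, fun ψ' hψ' => ?_⟩, hs'ψ.symm.trans (hval ψ hψ).symm⟩
    rw [hval ψ hψ, hval ψ' hψ', hs'ψ]
    exact (hs' ψ' hψ').2

lemma IsContinuationEq.isOutcome [Nonempty M] (hμ0 : ∀ θ, 0 ≤ μ0 θ) (hχ0 : 0 ≤ χ) (hχ1 : χ ≤ 1)
    {ψ σ : Θ → M → ℝ} (hψ : IsExperiment ψ) {α : M → A → ℝ} {β : M → Θ → ℝ}
    (h : IsContinuationEq uS uR μ0 χ ψ σ α β) :
    ∃ y, IsOutcome uS uR μ0 χ 0 (messageMass (χ • μ0) ψ) (messageMass ((1 - χ) • μ0) σ) α y := by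
  obtain ⟨m₀, hm₀⟩ := Finite.exists_max fun m => uS ⬝ᵥ α m
  have hd := isSplit_messageMass (fun θ => mul_nonneg hχ0 (hμ0 θ)) hψ
  have hc := isSplit_messageMass (fun θ => mul_nonneg (sub_nonneg.2 hχ1) (hμ0 θ)) h.influencing
  refine ⟨uS ⬝ᵥ α m₀, hd, hc, h.strategy, fun m => ?_,
    fun m θ => mul_le_mul_of_nonneg_left (hm₀ m) (hd.nonneg m θ), fun m θ => ?_,
    abs_dotProduct_le_norm (h.strategy m₀)⟩
  · have hbayes : (messageMass (χ • μ0) ψ + messageMass ((1 - χ) • μ0) σ) m =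
        (∑ θ, messageMass μ0 (χ • ψ + (1 - χ) • σ) m θ) • β m := by
      rw [← messageMass_mix]
      exact funext fun θ => (h.bayes m θ).symm.trans (mul_comm _ _)
    have hmass : 0 ≤ ∑ θ, messageMass μ0 (χ • ψ + (1 - χ) • σ) m θ := by
      rw [messageMass_mix]
      exact Finset.sum_nonneg fun θ _ => (hd.add hc).nonneg m θ
    intro a a'
    rw [hbayes, dotProduct_smul, smul_eq_mul, mul_left_comm]
    exact mul_nonpos_of_nonneg_of_nonpos hmass
      ((support_subset_BRf_iff (h.strategy m).1).1 (h.best_response m) a a')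
  · by_cases hσ : σ θ m = 0
    · simp only [messageMass, hσ, mul_zero, zero_mul]
    · rw [(hm₀ m).antisymm (h.optimal θ m hσ m₀)]

namespace IsOutcome

variable {η y : ℝ} {d c : M → Θ → ℝ} {α : M → A → ℝ}

lemma dotProduct_le (h : IsOutcome uS uR μ0 χ η d c α y) {m : M} (hm : (d + c) m ≠ 0) :
    uS ⬝ᵥ α m ≤ y := by
  obtain ⟨θ, hθ⟩ := Function.ne_iff.1 hm
  by_cases hc : c m θ = 0
  · have hd : d m θ ≠ 0 := by simpa [hc] using hθ
    exact le_of_mul_le_mul_left (h.value_le m θ) ((h.truthful.nonneg m θ).lt_of_ne' hd)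
  · exact (mul_left_cancel₀ hc (h.value_eq m θ)).le

lemma add_ne_zero (h : IsOutcome uS uR μ0 χ η d c α y) {m : M} {θ : Θ} (hc : c m θ ≠ 0) :
    (d + c) m ≠ 0 := fun h0 =>
  (add_pos_of_nonneg_of_pos (h.truthful.nonneg m θ) ((h.influenced.nonneg m θ).lt_of_ne' hc)).ne'
    (congrFun h0 θ)

lemma exists_best_message (hμ0 : μ0 ∈ stdSimplex ℝ Θ) (h : IsOutcome uS uR μ0 χ η d c α y) :
    ∃ m₀, (d + c) m₀ ≠ 0 ∧ ∀ m, (d + c) m ≠ 0 → uS ⬝ᵥ α m ≤ uS ⬝ᵥ α m₀ := by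
  refine Set.exists_max_image {m | (d + c) m ≠ 0} (fun m => uS ⬝ᵥ α m) (Set.toFinite _) ?_
  by_contra hempty
  have hzero : ∀ m, (d + c) m = 0 := fun m => by_contra fun hm => hempty ⟨m, hm⟩
  have hmass := h.isSplit.sum_sum_eq_one hμ0
  simp only [hzero, Pi.zero_apply, Finset.sum_const_zero, zero_ne_one] at hmass

lemma payoff_mem_continuationPayoffs (hμ0 : μ0 ∈ stdSimplex ℝ Θ) {ψ : Θ → M → ℝ}
    (h : IsOutcome uS uR μ0 χ 0 (messageMass (χ • μ0) ψ) c α y) :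
    payoff uS (messageMass (χ • μ0) ψ + c) α ∈ continuationPayoffs uS uR μ0 χ ψ := by
  classical
  obtain ⟨m₀, hm₀, hbest⟩ := h.exists_best_message hμ0
  -- Messages off the path are answered like the best message on the path.
  obtain ⟨r, hr, hr₀⟩ := exists_onPath_representative hm₀
  let σ : Θ → M → ℝ := fun θ => normalizeD (fun m => c m θ) (Pi.single m₀ 1)
  have hmass : messageMass μ0 (χ • ψ + (1 - χ) • σ) = messageMass (χ • μ0) ψ + c := by
    rw [messageMass_mix, messageMass_normalizeD h.influenced]
  refine ⟨σ, fun m => α (r m), fun m => normalizeD ((messageMass (χ • μ0) ψ + c) (r m)) μ0,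
    ⟨?_, ?_, ?_, ?_, ?_, ?_⟩, ?_⟩
  · exact fun θ => normalizeD_mem_stdSimplex (fun m => h.influenced.nonneg m θ)
      (single_mem_stdSimplex ℝ m₀)
  · exact fun m => h.strategy (r m)
  · exact fun m => normalizeD_mem_stdSimplex (h.isSplit.nonneg (r m)) hμ0
  · intro m
    rw [BRf_normalizeD uR (h.isSplit.nonneg (r m)) (hr₀ m)]
    exact h.support_subset_BRf (r m)
  · intro m θ
    rw [hmass, mul_comm]
    by_cases hm : (messageMass (χ • μ0) ψ + c) m = 0
    · simp only [hm, Pi.zero_apply, Finset.sum_const_zero, zero_mul]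
    · rw [hr m hm]
      exact congrFun (sum_smul_normalizeD (h.isSplit.nonneg m) μ0) θ
  · intro θ m hσ m'
    rcases ne_zero_or_ne_zero_of_normalizeD_ne_zero hσ with hc | hm
    · rw [hr m (h.add_ne_zero hc), mul_left_cancel₀ hc (h.value_eq m θ)]
      exact h.dotProduct_le (hr₀ m')
    · obtain rfl : m = m₀ := by_contra fun hne => hm (Pi.single_eq_of_ne hne _)
      rw [hr m hm₀]
      exact hbest _ (hr₀ m')
  · rw [hmass]
    refine Finset.sum_congr rfl fun m _ => ?_
    by_cases hm : (messageMass (χ • μ0) ψ + c) m = 0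
    · simp only [hm, Pi.zero_apply, Finset.sum_const_zero, zero_mul]
    · simp only [hr m hm]

end IsOutcome

lemma mem_continuationPayoffs_iff [Nonempty M] (hμ0 : μ0 ∈ stdSimplex ℝ Θ) (hχ0 : 0 ≤ χ)
    (hχ1 : χ ≤ 1) {ψ : Θ → M → ℝ} (hψ : IsExperiment ψ) {s : ℝ} :
    s ∈ continuationPayoffs uS uR μ0 χ ψ ↔ ∃ c α y,
      IsOutcome uS uR μ0 χ 0 (messageMass (χ • μ0) ψ) c α y ∧
        payoff uS (messageMass (χ • μ0) ψ + c) α = s := by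
  constructor
  · rintro ⟨σ, α, β, h, rfl⟩
    obtain ⟨y, hy⟩ := h.isOutcome hμ0.1 hχ0 hχ1 hψ
    exact ⟨_, α, y, hy, by rw [messageMass_mix]⟩
  · rintro ⟨c, α, y, h, rfl⟩
    exact h.payoff_mem_continuationPayoffs hμ0

lemma IsOutcome.mem_chiPBEPayoffs [Nonempty M] (hμ0 : μ0 ∈ stdSimplex ℝ Θ) {y : ℝ}
    {d c : M → Θ → ℝ} {α : M → A → ℝ} (h : IsOutcome uS uR μ0 χ 0 d c α y)
    (hdev : ∀ ψ : Θ → M → ℝ, IsExperiment ψ →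
      ∃ s ∈ continuationPayoffs uS uR μ0 χ ψ, s ≤ payoff uS (d + c) α) :
    payoff uS (d + c) α ∈ chiPBEPayoffs A M uS uR μ0 χ := by
  obtain ⟨ψ, hψ, rfl⟩ := h.truthful.exists_experiment
  exact mem_chiPBEPayoffs_iff.2 ⟨ψ, hψ, h.payoff_mem_continuationPayoffs hμ0, hdev⟩

end ContinuationEquilibrium

section Allocation

variable {M : Type*} [Fintype M] [Nonempty M]

lemma exists_allocation_forall_le (f : M → ℕ → ℝ) (N : ℕ) :
    ∃ n : M → ℕ, ∑ m, n m = N ∧ ∀ m m', m ≠ m' → n m ≠ 0 → f m' (n m') ≤ f m (n m - 1) := by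
  classical
  -- A maximiser of this potential cannot gain by moving a unit from `m` to `m'`.
  let Φ : (M → ℕ) → ℝ := fun n => ∑ m, ∑ j ∈ Finset.range (n m), f m j
  have hΦ (p : M → ℕ) (m : M) : Φ (p + Pi.single m 1) = Φ p + f m (p m) := by
    have hk (k : M) : ∑ j ∈ Finset.range ((p + Pi.single m 1 : M → ℕ) k), f k j =
        ∑ j ∈ Finset.range (p k), f k j + if k = m then f m (p m) else 0 := by
      rcases eq_or_ne k m with rfl | hne
      · simp [Finset.sum_range_succ]
      · simp [hne]
    simp only [Φ, hk, Finset.sum_add_distrib, Finset.sum_ite_eq', Finset.mem_univ, if_true]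
  have hsum (p : M → ℕ) (m : M) : ∑ k, (p + Pi.single m 1 : M → ℕ) k = ∑ k, p k + 1 := by
    simp only [Pi.add_apply, Finset.sum_add_distrib, Finset.sum_pi_single', Finset.mem_univ,
      if_true]
  have hmem (n : M → ℕ) : n ∈ Finset.piAntidiag Finset.univ N ↔ ∑ m, n m = N := by
    simp only [Finset.mem_piAntidiag, Finset.mem_univ, implies_true, and_true]
  obtain ⟨m₀⟩ := ‹Nonempty M›
  obtain ⟨n, hn, hmax⟩ := (Finset.piAntidiag Finset.univ N).exists_max_image Φ
    ⟨Pi.single m₀ N, (hmem _).2 (by simp)⟩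
  refine ⟨n, (hmem n).1 hn, fun m m' hne hm => ?_⟩
  obtain ⟨p, rfl⟩ : ∃ p : M → ℕ, n = p + Pi.single m 1 :=
    ⟨n - Pi.single m 1, (tsub_add_cancel_of_le <| update_le_iff.2
      ⟨Nat.one_le_iff_ne_zero.2 hm, fun _ _ => Nat.zero_le _⟩).symm⟩
  have hle := hmax (p + Pi.single m' 1) ((hmem _).2 (by rw [hsum, ← hsum p m, (hmem _).1 hn]))
  rw [hΦ, hΦ, add_le_add_iff_left] at hle
  simpa [hne.symm] using hle

lemma exists_allocation_level (f : M → ℕ → ℝ) {N : ℕ} (hN : N ≠ 0) :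
    ∃ n : M → ℕ, ∑ m, n m = N ∧ ∃ m₀ j₀, ∀ m,
      (∃ j ∈ Finset.Icc (n m - 1) (n m), f m j ≤ f m₀ j₀) ∧
      (n m ≠ 0 → ∃ j ∈ Finset.Icc (n m - 1) (n m), f m₀ j₀ ≤ f m j) := by
  obtain ⟨n, hn, hle⟩ := exists_allocation_forall_le f N
  have hne : {m | n m ≠ 0}.Nonempty := by
    by_contra hempty
    exact hN (hn.symm.trans (Finset.sum_eq_zero fun m _ => by_contra fun hm => hempty ⟨m, hm⟩))
  obtain ⟨m₀, hm₀, hmin⟩ := Set.exists_min_image _ (fun m => f m (n m - 1)) (Set.toFinite _) hne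
  have hleft (m : M) : n m - 1 ∈ Finset.Icc (n m - 1) (n m) :=
    Finset.left_mem_Icc.2 (Nat.sub_le _ _)
  refine ⟨n, hn, m₀, n m₀ - 1, fun m => ⟨?_, fun hm => ⟨n m - 1, hleft m, hmin m hm⟩⟩⟩
  rcases eq_or_ne m₀ m with rfl | h
  · exact ⟨n m₀ - 1, hleft m₀, le_rfl⟩
  · exact ⟨n m, Finset.right_mem_Icc.2 (Nat.sub_le _ _), hle m₀ m h hm₀⟩

end Allocation

section Existence

variable {A Θ M : Type*} [Fintype A] [Fintype Θ] [Fintype M]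

omit [Fintype A] in
lemma dotProduct_le_of_mem_BRf_add_smul {uR : A → Θ → ℝ} {b π : Θ → ℝ} {s : ℝ} {a : A}
    (ha : a ∈ BRf uR (b + s • π)) (t : ℝ) (a' : A) :
    (uR a' - uR a) ⬝ᵥ (b + t • π) ≤ |t - s| * |(uR a' - uR a) ⬝ᵥ π| := by
  calc (uR a' - uR a) ⬝ᵥ (b + t • π)
      = (uR a' - uR a) ⬝ᵥ (b + s • π) + (t - s) * ((uR a' - uR a) ⬝ᵥ π) := by
        simp only [dotProduct_add, dotProduct_smul, smul_eq_mul]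
        ring
    _ ≤ (t - s) * ((uR a' - uR a) ⬝ᵥ π) := add_le_of_nonpos_left (mem_BRf_iff.1 ha a')
    _ ≤ |t - s| * |(uR a' - uR a) ⬝ᵥ π| := (le_abs_self _).trans_eq (abs_mul _ _)

lemma exists_approx_allocation [Nonempty A] [Nonempty M] (uS : A → ℝ) (uR : A → Θ → ℝ)
    (d : M → Θ → ℝ) (π : Θ → ℝ) {δ : ℝ} (hδ : 0 < δ) :
    ∃ q ∈ stdSimplex ℝ M, ∃ α : M → A → ℝ, ∃ y, |y| ≤ ‖uS‖ ∧ ∀ m, α m ∈ stdSimplex ℝ A ∧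
      Function.support (α m) ⊆ {a | ∃ s, |q m - s| ≤ δ ∧ a ∈ BRf uR (d m + s • π)} ∧
      uS ⬝ᵥ α m ≤ y ∧ (q m ≠ 0 → uS ⬝ᵥ α m = y) := by
  obtain ⟨N, hN, hNδ⟩ : ∃ N : ℕ, N ≠ 0 ∧ 1 / (N : ℝ) ≤ δ := by
    obtain ⟨N, hN⟩ := exists_nat_one_div_lt hδ
    exact ⟨N + 1, N.succ_ne_zero, by exact_mod_cast hN.le⟩
  have hN' : (0 : ℝ) < N := Nat.cast_pos.2 (Nat.pos_of_ne_zero hN)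
  choose act hact using fun (m : M) (j : ℕ) => BRf_nonempty uR (d m + ((j : ℝ) / N) • π)
  obtain ⟨n, hn, m₀, j₀, hlevel⟩ := exists_allocation_level (fun m j => uS (act m j)) hN
  let q : M → ℝ := fun m => n m / N
  let S : M → Set A := fun m => {a | ∃ s, |q m - s| ≤ δ ∧ a ∈ BRf uR (d m + s • π)}
  have hS (m : M) (j : ℕ) (hj : j ∈ Finset.Icc (n m - 1) (n m)) : act m j ∈ S m := by
    refine ⟨j / N, le_trans ?_ hNδ, hact m j⟩
    have hnj : (n m : ℝ) ≤ j + 1 := by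
      exact_mod_cast Nat.sub_le_iff_le_add.1 (Finset.mem_Icc.1 hj).1
    have hjn : (j : ℝ) ≤ n m := by exact_mod_cast (Finset.mem_Icc.1 hj).2
    rw [← sub_div, abs_of_nonneg (div_nonneg (sub_nonneg.2 hjn) hN'.le)]
    gcongr
    linarith
  have hα (m : M) : ∃ α ∈ stdSimplex ℝ A, Function.support α ⊆ S m ∧
      uS ⬝ᵥ α ≤ uS (act m₀ j₀) ∧ (q m ≠ 0 → uS ⬝ᵥ α = uS (act m₀ j₀)) := by
    obtain ⟨⟨j, hj, hle⟩, hge⟩ := hlevel m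
    by_cases hm : n m = 0
    · obtain ⟨α, hα, hsupp, heq⟩ := exists_mixed_action (u := uS) (y := uS (act m j))
        ⟨_, hS m j hj, le_rfl⟩ ⟨_, hS m j hj, le_rfl⟩
      exact ⟨α, hα, hsupp, heq.trans_le hle, fun hq => absurd (by simp [q, hm]) hq⟩
    · obtain ⟨j', hj', hle'⟩ := hge hm
      obtain ⟨α, hα, hsupp, heq⟩ := exists_mixed_action ⟨_, hS m j hj, hle⟩ ⟨_, hS m j' hj', hle'⟩
      exact ⟨α, hα, hsupp, heq.le, fun _ => heq⟩
  choose α hα using hα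
  refine ⟨q, ⟨fun m => by positivity, ?_⟩, α, uS (act m₀ j₀), norm_le_pi_norm uS _, hα⟩
  rw [← Finset.sum_div, ← Nat.cast_sum, hn, div_self hN'.ne']

variable {μ0 : Θ → ℝ} {χ : ℝ}

lemma IsSplit.exists_approx_outcome [Nonempty A] [Nonempty M] (uS : A → ℝ) (uR : A → Θ → ℝ)
    (hμ0 : ∀ θ, 0 ≤ μ0 θ) (hχ1 : χ ≤ 1) {d : M → Θ → ℝ} (hd : IsSplit (χ • μ0) d) {η : ℝ}
    (hη : 0 < η) : ∃ c α y, IsOutcome uS uR μ0 χ η d c α y := by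
  set π : Θ → ℝ := (1 - χ) • μ0 with hπ
  have hπ0 (θ : Θ) : 0 ≤ π θ := mul_nonneg (sub_nonneg.2 hχ1) (hμ0 θ)
  let D : ℝ := ‖fun p : A × A => (uR p.2 - uR p.1) ⬝ᵥ π‖
  obtain ⟨q, hq, α, y, hy, hα⟩ := exists_approx_allocation uS uR d π
    (show 0 < η / (D + 1) by positivity)
  refine ⟨fun m => q m • π, α, y, hd,
    ⟨fun m θ => mul_nonneg (hq.1 m) (hπ0 θ), fun θ => ?_⟩, fun m => (hα m).1, fun m a a' => ?_,
    fun m θ => mul_le_mul_of_nonneg_left (hα m).2.2.1 (hd.nonneg m θ), fun m θ => ?_, hy⟩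
  · simp only [Pi.smul_apply, smul_eq_mul, ← Finset.sum_mul, hq.2, one_mul, hπ]
  · by_cases ha : α m a = 0
    · rw [ha, zero_mul]
      exact hη.le
    obtain ⟨s, hs, has⟩ := (hα m).2.1 ha
    have hregret : (uR a' - uR a) ⬝ᵥ (d m + q m • π) ≤ η :=
      calc (uR a' - uR a) ⬝ᵥ (d m + q m • π)
          ≤ |q m - s| * |(uR a' - uR a) ⬝ᵥ π| := dotProduct_le_of_mem_BRf_add_smul has _ a'
        _ ≤ η / (D + 1) * (D + 1) := by
          gcongr
          exact (norm_le_pi_norm (fun p : A × A => (uR p.2 - uR p.1) ⬝ᵥ π) (a, a')).trans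
            (le_add_of_nonneg_right zero_le_one)
        _ = η := div_mul_cancel₀ η (by positivity)
    have hαa := mem_Icc_of_mem_stdSimplex (hα m).1 a
    calc α m a * ((uR a' - uR a) ⬝ᵥ (d m + q m • π)) ≤ α m a * η :=
          mul_le_mul_of_nonneg_left hregret hαa.1
      _ ≤ η := mul_le_of_le_one_left hη.le hαa.2
  · by_cases hqm : q m = 0
    · simp only [hqm, zero_smul, Pi.zero_apply, zero_mul]
    · rw [(hα m).2.2.2 hqm]

lemma IsSplit.exists_outcome [Nonempty A] [Nonempty M] (uS : A → ℝ) (uR : A → Θ → ℝ)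
    (hμ0 : ∀ θ, 0 ≤ μ0 θ) (hχ1 : χ ≤ 1) {d : M → Θ → ℝ} (hd : IsSplit (χ • μ0) d) :
    ∃ c α y, IsOutcome uS uR μ0 χ 0 d c α y := by
  have hclosed : IsClosed {z : (M → Θ → ℝ) × (M → Θ → ℝ) × (M → A → ℝ) × ℝ | z.1 = d} :=
    isClosed_eq (by fun_prop) continuous_const
  obtain ⟨⟨_, c, α, y⟩, h, rfl⟩ := outcomes_zero_inter_nonempty hclosed fun η hη => by
    obtain ⟨c, α, y, h⟩ := hd.exists_approx_outcome uS uR hμ0 hχ1 hη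
    exact ⟨(d, c, α, y), h, rfl⟩
  exact ⟨c, α, y, h⟩

end Existence

section SenderValue

variable {A Θ M : Type*} [Finite A] [Fintype Θ] [Fintype M] {uS : A → ℝ} {uR : A → Θ → ℝ}
  {μ0 : Θ → ℝ}

lemma wG_le_of_mem_BRf (uS : A → ℝ) {μ : Θ → ℝ} {a : A} (ha : a ∈ BRf uR μ) : wG uS uR μ ≤ uS a :=
  csInf_le (Set.toFinite _).bddBelow ⟨a, ha, rfl⟩

lemma le_vG_of_mem_BRf (uS : A → ℝ) {μ : Θ → ℝ} {a : A} (ha : a ∈ BRf uR μ) : uS a ≤ vG uS uR μ :=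
  le_csSup (Set.toFinite _).bddAbove ⟨a, ha, rfl⟩

lemma exists_mem_BRf_eq_wG [Nonempty A] (uS : A → ℝ) (uR : A → Θ → ℝ) (μ : Θ → ℝ) :
    ∃ a ∈ BRf uR μ, uS a = wG uS uR μ :=
  ((BRf_nonempty uR μ).image uS).csInf_mem (Set.toFinite _)

lemma exists_mem_BRf_eq_vG [Nonempty A] (uS : A → ℝ) (uR : A → Θ → ℝ) (μ : Θ → ℝ) :
    ∃ a ∈ BRf uR μ, uS a = vG uS uR μ :=
  ((BRf_nonempty uR μ).image uS).csSup_mem (Set.toFinite _)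

lemma sum_mul_vG_le_vHatG (hμ0 : μ0 ∈ stdSimplex ℝ Θ) {b : M → Θ → ℝ} (hb : IsSplit μ0 b) :
    ∑ m, (∑ θ, b m θ) * vG uS uR (b m) ≤ vHatG uS uR μ0 :=
  hb.splitValue_le_persuasionValue hμ0 (g := fun S => sSup (uS '' S))

lemma sum_mul_wG_le_wHatG (hμ0 : μ0 ∈ stdSimplex ℝ Θ) {b : M → Θ → ℝ} (hb : IsSplit μ0 b) :
    ∑ m, (∑ θ, b m θ) * wG uS uR (b m) ≤ wHatG uS uR μ0 :=
  hb.splitValue_le_persuasionValue hμ0 (g := fun S => sInf (uS '' S))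

lemma vHatG_le [Nonempty A] (hμ0 : μ0 ∈ stdSimplex ℝ Θ) (hcard : Fintype.card Θ ≤ Fintype.card M)
    {x : ℝ} (h : ∀ b : M → Θ → ℝ, IsSplit μ0 b → ∑ m, (∑ θ, b m θ) * vG uS uR (b m) ≤ x) :
    vHatG uS uR μ0 ≤ x :=
  persuasionValue_le_of_forall_splitValue_le hμ0 hcard h (g := fun S => sSup (uS '' S))

lemma wHatG_le [Nonempty A] (hμ0 : μ0 ∈ stdSimplex ℝ Θ) (hcard : Fintype.card Θ ≤ Fintype.card M)
    {x : ℝ} (h : ∀ b : M → Θ → ℝ, IsSplit μ0 b → ∑ m, (∑ θ, b m θ) * wG uS uR (b m) ≤ x) :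
    wHatG uS uR μ0 ≤ x :=
  persuasionValue_le_of_forall_splitValue_le hμ0 hcard h (g := fun S => sInf (uS '' S))

lemma wG_le_wHatG (hμ0 : μ0 ∈ stdSimplex ℝ Θ) : wG uS uR μ0 ≤ wHatG uS uR μ0 := by
  simpa only [hμ0.2, one_mul, Finset.univ_unique, Finset.sum_singleton] using
    sum_mul_wG_le_wHatG (uS := uS) (uR := uR) hμ0 (isSplit_unit hμ0.1)

end SenderValue

section Bounds

variable {A Θ M : Type*} [Fintype A] [Fintype Θ] [Fintype M] {uS : A → ℝ} {uR : A → Θ → ℝ}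
  {μ0 : Θ → ℝ} {χ y : ℝ} {d c : M → Θ → ℝ} {α : M → A → ℝ}

lemma IsOutcome.payoff_le_vHatG (hμ0 : μ0 ∈ stdSimplex ℝ Θ) (h : IsOutcome uS uR μ0 χ 0 d c α y) :
    payoff uS (d + c) α ≤ vHatG uS uR μ0 :=
  (Finset.sum_le_sum fun m _ => mul_le_mul_of_nonneg_left
    (dotProduct_le_of_support_subset (h.strategy m) fun _ ha =>
      le_vG_of_mem_BRf uS (h.support_subset_BRf m ha))
    (Finset.sum_nonneg fun θ _ => h.isSplit.nonneg m θ)).trans (sum_mul_vG_le_vHatG hμ0 h.isSplit)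

lemma IsOutcome.sum_mul_wG_le_payoff (h : IsOutcome uS uR μ0 χ 0 d c α y) :
    ∑ m, (∑ θ, (d + c) m θ) * wG uS uR ((d + c) m) ≤ payoff uS (d + c) α :=
  Finset.sum_le_sum fun m _ => mul_le_mul_of_nonneg_left
    (le_dotProduct_of_support_subset (h.strategy m) fun _ ha =>
      wG_le_of_mem_BRf uS (h.support_subset_BRf m ha))
    (Finset.sum_nonneg fun θ _ => h.isSplit.nonneg m θ)

end Bounds

section Penalty

variable {A Θ M : Type*} [Fintype A] [Fintype Θ] [Fintype M] {uS : A → ℝ} {uR : A → Θ → ℝ}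
  {μ μ0 : Θ → ℝ} {χ ε y : ℝ} {d c : M → Θ → ℝ} {α : M → A → ℝ}

/-- The utility of a receiver who dislikes, with weight `ε`, what benefits the sender. Such a
receiver breaks ties of the original one against the sender. -/
def penalize (uS : A → ℝ) (uR : A → Θ → ℝ) (ε : ℝ) (a : A) (θ : Θ) : ℝ :=
  uR a θ - ε * uS a

omit [Fintype A] in
lemma dotProduct_penalize_sub (a a' : A) :
    (penalize uS uR ε a' - penalize uS uR ε a) ⬝ᵥ μ =
      (uR a' - uR a) ⬝ᵥ μ - ε * (∑ θ, μ θ) * (uS a' - uS a) := by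
  simp only [dotProduct, penalize, Pi.sub_apply, Finset.mul_sum, Finset.sum_mul,
    ← Finset.sum_sub_distrib]
  exact Finset.sum_congr rfl fun θ _ => by ring

omit [Fintype A] in
lemma le_wG_of_mem_BRf_penalize [Finite A] [Nonempty A] (hε : 0 < ε) (hμ : 0 < ∑ θ, μ θ) {a : A}
    (ha : a ∈ BRf (penalize uS uR ε) μ) : uS a ≤ wG uS uR μ := by
  obtain ⟨a', ha', heq⟩ := exists_mem_BRf_eq_wG uS uR μ
  have hpen := mem_BRf_iff.1 ha a'
  have hresp := mem_BRf_iff.1 ha' a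
  rw [dotProduct_penalize_sub] at hpen
  rw [← neg_sub, neg_dotProduct, neg_nonpos] at hresp
  rw [← heq, ← sub_nonneg]
  exact nonneg_of_mul_nonneg_right (hresp.trans (sub_nonpos.1 hpen)) (mul_pos hε hμ)

namespace IsOutcome

lemma of_penalize (hμ0 : μ0 ∈ stdSimplex ℝ Θ) (hε : 0 ≤ ε)
    (h : IsOutcome uS (penalize uS uR ε) μ0 χ 0 d c α y) :
    IsOutcome uS uR μ0 χ (ε * (2 * ‖uS‖)) d c α y where
  __ := h
  regret_le m a a' := by
    have hα := mem_Icc_of_mem_stdSimplex (h.strategy m) a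
    have hmass0 (m : M) : 0 ≤ ∑ θ, (d + c) m θ := Finset.sum_nonneg fun θ _ => h.isSplit.nonneg m θ
    have hmass1 : ∑ θ, (d + c) m θ ≤ 1 := h.isSplit.sum_sum_eq_one hμ0 ▸
      Finset.single_le_sum (f := fun m => ∑ θ, (d + c) m θ) (fun m _ => hmass0 m)
        (Finset.mem_univ m)
    have hdiff : uS a' - uS a ≤ 2 * ‖uS‖ := by
      linarith [(abs_le.1 (norm_le_pi_norm uS a')).2, (abs_le.1 (norm_le_pi_norm uS a)).1]
    have hregret := h.regret_le m a a'
    rw [dotProduct_penalize_sub, mul_sub, sub_nonpos] at hregret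
    calc α m a * ((uR a' - uR a) ⬝ᵥ (d + c) m)
        ≤ α m a * (ε * (∑ θ, (d + c) m θ) * (uS a' - uS a)) := hregret
      _ ≤ α m a * (ε * (∑ θ, (d + c) m θ) * (2 * ‖uS‖)) := mul_le_mul_of_nonneg_left
          (mul_le_mul_of_nonneg_left hdiff (mul_nonneg hε (hmass0 m))) hα.1
      _ ≤ 1 * (ε * 1 * (2 * ‖uS‖)) := by
          have := hmass0 m
          gcongr
          exact hα.2
      _ = ε * (2 * ‖uS‖) := by ring

lemma payoff_le_wHatG_of_penalize [Nonempty A] (hμ0 : μ0 ∈ stdSimplex ℝ Θ) (hε : 0 < ε)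
    (h : IsOutcome uS (penalize uS uR ε) μ0 χ 0 d c α y) :
    payoff uS (d + c) α ≤ wHatG uS uR μ0 := by
  refine le_trans (Finset.sum_le_sum fun m _ => ?_) (sum_mul_wG_le_wHatG hμ0 h.isSplit)
  rcases (Finset.sum_nonneg fun θ _ => h.isSplit.nonneg m θ).eq_or_lt with hmass | hmass
  · rw [← hmass, zero_mul, zero_mul]
  · exact mul_le_mul_of_nonneg_left (dotProduct_le_of_support_subset (h.strategy m) fun _ ha =>
      le_wG_of_mem_BRf_penalize hε hmass (h.support_subset_BRf m ha)) hmass.le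

end IsOutcome

lemma IsSplit.exists_outcome_payoff_le_wHatG [Nonempty A] [Nonempty M] (uS : A → ℝ)
    (uR : A → Θ → ℝ) (hμ0 : μ0 ∈ stdSimplex ℝ Θ) (hχ1 : χ ≤ 1) (hd : IsSplit (χ • μ0) d) :
    ∃ c α y, IsOutcome uS uR μ0 χ 0 d c α y ∧ payoff uS (d + c) α ≤ wHatG uS uR μ0 := by
  have hclosed : IsClosed {z : (M → Θ → ℝ) × (M → Θ → ℝ) × (M → A → ℝ) × ℝ |
      z.1 = d ∧ payoff uS (z.1 + z.2.1) z.2.2.1 ≤ wHatG uS uR μ0} :=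
    (isClosed_eq (by fun_prop) continuous_const).inter
      (isClosed_le (continuous_payoff uS) continuous_const)
  obtain ⟨⟨_, c, α, y⟩, h, rfl, hle⟩ := outcomes_zero_inter_nonempty hclosed fun η hη => by
    have hε : 0 < η / (2 * ‖uS‖ + 1) := by positivity
    obtain ⟨c, α, y, h⟩ := hd.exists_outcome uS (penalize uS uR (η / (2 * ‖uS‖ + 1))) hμ0.1 hχ1
    refine ⟨(d, c, α, y), outcomes_mono ?_ (h.of_penalize hμ0 hε.le), rfl,
      h.payoff_le_wHatG_of_penalize hμ0 hε⟩
    rw [div_mul_eq_mul_div, div_le_iff₀ (by positivity)]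
    gcongr
    exact le_add_of_nonneg_right zero_le_one
  exact ⟨c, α, y, h, hle⟩

end Penalty

section Pooling

variable {A Θ M : Type*} [Fintype A] [Fintype Θ] [Fintype M] {uS : A → ℝ} {uR : A → Θ → ℝ}
  {μ0 : Θ → ℝ} {χ y t : ℝ} {d c : M → Θ → ℝ} {α : M → A → ℝ}

omit [Fintype A] in
lemma isClosed_setOf_exists_mem_BRf [Finite A] {X : Type*} [TopologicalSpace X] (uR : A → Θ → ℝ)
    {f : X → Θ → ℝ} (hf : Continuous f) (S : Set A) :
    IsClosed {x | ∃ a ∈ S, a ∈ BRf uR (f x)} := by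
  have h : {x | ∃ a ∈ S, a ∈ BRf uR (f x)} =
      ⋃ a ∈ S, ⋂ a', {x | (uR a' - uR a) ⬝ᵥ f x ≤ 0} := by
    ext x
    simp only [mem_BRf_iff, Set.mem_ofPred_eq, Set.mem_iUnion, Set.mem_iInter, exists_prop]
  rw [h]
  exact (Set.toFinite S).isClosed_biUnion fun a _ => isClosed_iInter fun a' =>
    isClosed_le (by fun_prop) continuous_const

/-- An intermediate value theorem for the correspondence of best responses along a segment. -/
lemma exists_response_on_segment [Nonempty A] {b μ : Θ → ℝ} (hb : ∃ a ∈ BRf uR b, y ≤ uS a)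
    (hμ : ∃ a ∈ BRf uR μ, uS a ≤ y) :
    ∃ l ∈ Set.Icc (0 : ℝ) 1, ∃ α ∈ stdSimplex ℝ A,
      Function.support α ⊆ BRf uR ((1 - l) • b + l • μ) ∧ uS ⬝ᵥ α = y := by
  obtain ⟨a, ha, hya⟩ := hb
  obtain ⟨a', ha', hay'⟩ := hμ
  have hcont : Continuous fun l : ℝ => (1 - l) • b + l • μ := by fun_prop
  obtain ⟨l, hl, ⟨a₁, hle, h₁⟩, a₂, hge, h₂⟩ := isPreconnected_closed_iff.1
    (isPreconnected_Icc (a := (0 : ℝ)) (b := 1)) _ _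
    (isClosed_setOf_exists_mem_BRf uR hcont {a | uS a ≤ y})
    (isClosed_setOf_exists_mem_BRf uR hcont {a | y ≤ uS a})
    (fun l _ => by
      obtain ⟨a, ha⟩ := BRf_nonempty uR ((1 - l) • b + l • μ)
      exact (le_total (uS a) y).imp (fun h => ⟨a, h, ha⟩) fun h => ⟨a, h, ha⟩)
    ⟨1, ⟨zero_le_one, le_rfl⟩, a', hay', by simpa only [sub_self, zero_smul, zero_add, one_smul]⟩
    ⟨0, ⟨le_rfl, zero_le_one⟩, a, hya, by simpa only [sub_zero, zero_smul, add_zero, one_smul]⟩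
  exact ⟨l, hl, exists_mixed_action ⟨a₁, h₁, hle⟩ ⟨a₂, h₂, hge⟩⟩

lemma exists_truncated_response [Nonempty A] {b μ : Θ → ℝ} {α : A → ℝ} (hα : α ∈ stdSimplex ℝ A)
    (hsupp : Function.support α ⊆ BRf uR b) (hy : wG uS uR μ ≤ y) :
    ∃ l ∈ Set.Icc (0 : ℝ) 1, ∃ α' ∈ stdSimplex ℝ A,
      Function.support α' ⊆ BRf uR ((1 - l) • b + l • μ) ∧ uS ⬝ᵥ α' = min (uS ⬝ᵥ α) y ∧
        (l = 0 ∨ uS ⬝ᵥ α' = y) := by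
  rcases le_or_gt (uS ⬝ᵥ α) y with hle | hlt
  · refine ⟨0, ⟨le_rfl, zero_le_one⟩, α, hα, ?_, (min_eq_left hle).symm, .inl rfl⟩
    rwa [sub_zero, one_smul, zero_smul, add_zero]
  · have hb : ∃ a ∈ BRf uR b, y ≤ uS a := by
      by_contra! hcon
      exact hlt.not_ge (dotProduct_le_of_support_subset hα fun a ha => (hcon a (hsupp ha)).le)
    obtain ⟨a, ha, heq⟩ := exists_mem_BRf_eq_wG uS uR μ
    obtain ⟨l, hl, α', hα', hsupp', hy'⟩ :=
      exists_response_on_segment hb ⟨a, ha, heq.trans_le hy⟩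
    exact ⟨l, hl, α', hα', hsupp', hy'.trans (min_eq_right hlt.le).symm, .inr hy'⟩

lemma exists_common_weight {l : M → ℝ} (hl : ∀ m, l m ∈ Set.Icc (0 : ℝ) 1) :
    ∃ κ, 0 ≤ κ ∧ ∃ x : M → ℝ, (∀ m, 0 ≤ x m) ∧ (∀ m, x m * (1 - l m) = κ) ∧
      κ + ∑ m, x m * l m = 1 := by
  classical
  by_cases hone : ∃ m, l m = 1
  · obtain ⟨m₀, hm₀⟩ := hone
    refine ⟨0, le_rfl, Pi.single m₀ 1, (single_mem_stdSimplex ℝ m₀).1, fun m => ?_, ?_⟩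
    · rcases eq_or_ne m m₀ with rfl | hne
      · rw [hm₀, sub_self, mul_zero]
      · rw [Pi.single_eq_of_ne hne, zero_mul]
    · exact (zero_add _).trans ((single_one_dotProduct m₀ l).trans hm₀)
  · have hlt (m : M) : 0 < 1 - l m := sub_pos.2 ((hl m).2.lt_of_ne fun h => hone ⟨m, h⟩)
    have hx (m : M) : 0 ≤ l m / (1 - l m) := div_nonneg (hl m).1 (hlt m).le
    have hL : 0 < 1 + ∑ m, l m / (1 - l m) :=
      add_pos_of_pos_of_nonneg one_pos (Finset.sum_nonneg fun m _ => hx m)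
    set κ := (1 + ∑ m, l m / (1 - l m))⁻¹
    refine ⟨κ, (inv_pos.2 hL).le, fun m => κ / (1 - l m),
      fun m => div_nonneg (inv_pos.2 hL).le (hlt m).le, fun m => div_mul_cancel₀ κ (hlt m).ne', ?_⟩
    simp only [div_mul_eq_mul_div, mul_div_assoc, ← Finset.mul_sum]
    rw [← mul_one_add, inv_mul_cancel₀ hL.ne']

omit [Fintype Θ] [Fintype M] in
lemma pool_add_pool (d c : M → Θ → ℝ) (μ : Θ → ℝ) (χ κ : ℝ) (τ : M → ℝ) :
    (fun m => κ • d m + τ m • χ • μ) + (fun m => κ • c m + τ m • (1 - χ) • μ) =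
      fun m => κ • (d + c) m + τ m • μ := by
  ext m θ
  simp only [Pi.add_apply, Pi.smul_apply, smul_eq_mul]
  ring

lemma payoff_pool (hμ0 : ∑ θ, μ0 θ = 1) {κ : ℝ} {τ : M → ℝ} (hsum : κ + ∑ m, τ m = 1)
    (hτ : ∀ m, τ m * (uS ⬝ᵥ α m) = τ m * y) (b : M → Θ → ℝ) :
    payoff uS (fun m => κ • b m + τ m • μ0) α = κ * payoff uS b α + (1 - κ) * y := by
  simp only [payoff, ← hsum, add_sub_cancel_left, Finset.mul_sum, Finset.sum_mul,
    ← Finset.sum_add_distrib]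
  refine Finset.sum_congr rfl fun m _ => ?_
  simp only [Pi.add_apply, Pi.smul_apply, smul_eq_mul, add_mul, Finset.sum_add_distrib, mul_assoc,
    ← Finset.mul_sum, ← Finset.sum_mul, hμ0, one_mul, hτ]

namespace IsOutcome

lemma mass_mul_le {η : ℝ} (h : IsOutcome uS uR μ0 χ η d c α y) (m : M) :
    (∑ θ, (d + c) m θ) * (uS ⬝ᵥ α m) ≤ (∑ θ, (d + c) m θ) * y := by
  simp only [Finset.sum_mul, Pi.add_apply, add_mul]
  exact Finset.sum_le_sum fun θ _ => add_le_add (h.value_le m θ) (h.value_eq m θ).le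

lemma payoff_le {η : ℝ} (hμ0 : μ0 ∈ stdSimplex ℝ Θ) (h : IsOutcome uS uR μ0 χ η d c α y) :
    payoff uS (d + c) α ≤ y := by
  calc payoff uS (d + c) α ≤ ∑ m, (∑ θ, (d + c) m θ) * y :=
        Finset.sum_le_sum fun m _ => h.mass_mul_le m
    _ = y := by rw [← Finset.sum_mul, h.isSplit.sum_sum_eq_one hμ0, one_mul]

lemma payoff_sub_le_sum_min {η y' : ℝ} (hμ0 : μ0 ∈ stdSimplex ℝ Θ)
    (h : IsOutcome uS uR μ0 χ η d c α y) (hy : y' ≤ y) :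
    payoff uS (d + c) α - (y - y') ≤ ∑ m, (∑ θ, (d + c) m θ) * min (uS ⬝ᵥ α m) y' := by
  calc payoff uS (d + c) α - (y - y')
      = ∑ m, (∑ θ, (d + c) m θ) * (uS ⬝ᵥ α m - (y - y')) := by
        simp only [mul_sub (∑ θ, (d + c) _ θ) _ (y - y'), Finset.sum_sub_distrib,
          ← Finset.sum_mul _ _ (y - y'), h.isSplit.sum_sum_eq_one hμ0, one_mul, payoff]
    _ ≤ ∑ m, (∑ θ, (d + c) m θ) * min (uS ⬝ᵥ α m) y' := Finset.sum_le_sum fun m _ => by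
        have hmass : 0 ≤ ∑ θ, (d + c) m θ := Finset.sum_nonneg fun θ _ => h.isSplit.nonneg m θ
        rw [mul_min_of_nonneg _ _ hmass]
        refine le_min (mul_le_mul_of_nonneg_left (sub_le_self _ (sub_nonneg.2 hy)) hmass) ?_
        linarith [h.mass_mul_le m]

lemma pool (hμ0 : ∀ θ, 0 ≤ μ0 θ) (hχ0 : 0 ≤ χ) (hχ1 : χ ≤ 1)
    (h : IsOutcome uS uR μ0 χ 0 d c α y) {y' : ℝ} (hy : y' ≤ y) (habs : |y'| ≤ ‖uS‖) {κ : ℝ}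
    (hκ : 0 ≤ κ) {τ : M → ℝ} (hτ : ∀ m, 0 ≤ τ m) (hsum : κ + ∑ m, τ m = 1) {α' : M → A → ℝ}
    (hα' : ∀ m, α' m ∈ stdSimplex ℝ A)
    (hsupp : ∀ m, Function.support (α' m) ⊆ BRf uR (κ • (d + c) m + τ m • μ0))
    (hmin : ∀ m, uS ⬝ᵥ α' m = min (uS ⬝ᵥ α m) y')
    (hτy : ∀ m, τ m * (uS ⬝ᵥ α' m) = τ m * y') :
    IsOutcome uS uR μ0 χ 0 (fun m => κ • d m + τ m • χ • μ0)
      (fun m => κ • c m + τ m • (1 - χ) • μ0) α' y' := by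
  have hd := h.truthful.mix (fun θ => mul_nonneg hχ0 (hμ0 θ)) hκ hτ hsum
  have hc := h.influenced.mix (fun θ => mul_nonneg (sub_nonneg.2 hχ1) (hμ0 θ)) hκ hτ hsum
  refine ⟨hd, hc, hα', fun m => ?_, fun m θ => ?_, fun m θ => ?_, habs⟩
  · rw [pool_add_pool]
    exact (support_subset_BRf_iff (hα' m).1).1 (hsupp m)
  · exact mul_le_mul_of_nonneg_left (hmin m ▸ min_le_right _ _) (hd.nonneg m θ)
  · have hcy : c m θ * (uS ⬝ᵥ α' m) = c m θ * y' := by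
      by_cases hcm : c m θ = 0
      · rw [hcm, zero_mul, zero_mul]
      · rw [hmin, mul_left_cancel₀ hcm (h.value_eq m θ), min_eq_right hy]
    simp only [Pi.add_apply, Pi.smul_apply, smul_eq_mul]
    linear_combination κ * hcy + (1 - χ) * μ0 θ * hτy m

/-- Each message that yields more than `y'` is pooled with the prior until the receiver is willing
to give the sender exactly `y'`. -/
lemma exists_lower_level [Nonempty A] (hμ0 : μ0 ∈ stdSimplex ℝ Θ) (hχ0 : 0 ≤ χ) (hχ1 : χ ≤ 1)
    (h : IsOutcome uS uR μ0 χ 0 d c α y) {y' : ℝ} (hy : y' ≤ y) (hw : wG uS uR μ0 ≤ y') :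
    ∃ d' c' α', IsOutcome (M := M) uS uR μ0 χ 0 d' c' α' y' ∧
      payoff uS (d + c) α - (y - y') ≤ payoff uS (d' + c') α' := by
  choose l hl α' hα' hsupp hmin hcase using fun m =>
    exists_truncated_response (h.strategy m) (h.support_subset_BRf m) hw
  obtain ⟨κ, hκ, x, hx, hxκ, hsum⟩ := exists_common_weight hl
  have hτ (m : M) : 0 ≤ x m * l m := mul_nonneg (hx m) (hl m).1
  have hsupp' (m : M) :
      Function.support (α' m) ⊆ BRf uR (κ • (d + c) m + (x m * l m) • μ0) := by
    rw [← hxκ m, mul_smul, mul_smul, ← smul_add]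
    exact (hsupp m).trans (BRf_subset_BRf_smul uR _ (hx m))
  have hτy (m : M) : x m * l m * (uS ⬝ᵥ α' m) = x m * l m * y' := by
    rcases hcase m with hlm | hval
    · rw [hlm, mul_zero, zero_mul, zero_mul]
    · rw [hval]
  have habs : |y'| ≤ ‖uS‖ := by
    obtain ⟨a, -, ha⟩ := exists_mem_BRf_eq_wG uS uR μ0
    exact abs_le.2 ⟨(abs_le.1 (norm_le_pi_norm uS a)).1.trans (ha.trans_le hw),
      hy.trans (abs_le.1 h.abs_value_le).2⟩
  refine ⟨_, _, α', h.pool hμ0.1 hχ0 hχ1 hy habs hκ hτ hsum hα' hsupp' hmin hτy, ?_⟩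
  have hκ1 : 0 ≤ 1 - κ := by
    rw [← hsum, add_sub_cancel_left]
    exact Finset.sum_nonneg fun m _ => hτ m
  rw [pool_add_pool, payoff_pool hμ0.2 hsum hτy]
  have hle : payoff uS (d + c) α - (y - y') ≤ payoff uS (d + c) α' :=
    (h.payoff_sub_le_sum_min hμ0 hy).trans_eq (Finset.sum_congr rfl fun m _ => by rw [hmin])
  have hle' : payoff uS (d + c) α - (y - y') ≤ y' := by linarith [h.payoff_le hμ0]
  exact convex_Ici (_ : ℝ) (Set.mem_Ici.2 hle) (Set.mem_Ici.2 hle') hκ hκ1 (add_sub_cancel κ 1)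

lemma exists_payoff_eq [Nonempty A] (hμ0 : μ0 ∈ stdSimplex ℝ Θ) (hχ0 : 0 ≤ χ) (hχ1 : χ ≤ 1)
    (h : IsOutcome uS uR μ0 χ 0 d c α y) (ht : t ≤ payoff uS (d + c) α) (hw : wG uS uR μ0 ≤ t) :
    ∃ d' c' α' y', IsOutcome (M := M) uS uR μ0 χ 0 d' c' α' y' ∧ payoff uS (d' + c') α' = t := by
  -- Among the outcomes worth at least `t`, one with the least level `y` is worth exactly `t`.
  have hcompact := (isCompact_outcomes M uS uR μ0 χ 0).inter_right
    (isClosed_le continuous_const (continuous_payoff uS) : IsClosed {z | t ≤ _})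
  obtain ⟨⟨d', c', α', y'⟩, ⟨hz, hle⟩, hmin⟩ := hcompact.exists_isMinOn
    ⟨(d, c, α, y), h, ht⟩ (f := fun z => z.2.2.2) (by fun_prop)
  refine ⟨d', c', α', y', hz, (eq_of_le_of_not_lt hle fun hlt => ?_).symm⟩
  have hlevel := hz.payoff_le hμ0
  obtain ⟨d'', c'', α'', hz', hle'⟩ := hz.exists_lower_level hμ0 hχ0 hχ1
    (y' := y' - (payoff uS (d' + c') α' - t)) (by linarith) (by linarith)
  have hy : y' ≤ y' - (payoff uS (d' + c') α' - t) :=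
    hmin (a := (d'', c'', α'', _)) ⟨hz', show t ≤ payoff uS (d'' + c'') α'' by linarith⟩
  linarith

end IsOutcome

end Pooling

section PayoffSet

variable {A Θ M : Type*} [Fintype A] [Fintype Θ] [Fintype M] [Nonempty A] [Nonempty M]
  {uS : A → ℝ} {uR : A → Θ → ℝ} {μ0 : Θ → ℝ} {χ s t y : ℝ} {d c : M → Θ → ℝ} {α : M → A → ℝ}

variable (M) in
lemma exists_outcome_payoff_max (uS : A → ℝ) (uR : A → Θ → ℝ) (hμ0 : ∀ θ, 0 ≤ μ0 θ) (hχ0 : 0 ≤ χ)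
    (hχ1 : χ ≤ 1) :
    ∃ (d c : M → Θ → ℝ) (α : M → A → ℝ) (y : ℝ), IsOutcome uS uR μ0 χ 0 d c α y ∧
      ∀ d' c' α' y', IsOutcome (M := M) uS uR μ0 χ 0 d' c' α' y' →
        payoff uS (d' + c') α' ≤ payoff uS (d + c) α := by
  classical
  obtain ⟨m₀⟩ := ‹Nonempty M›
  obtain ⟨c, α, y, h⟩ := (isSplit_messageMass (fun θ => mul_nonneg hχ0 (hμ0 θ))
    fun _ => single_mem_stdSimplex ℝ m₀).exists_outcome uS uR hμ0 hχ1
  obtain ⟨z, hz, hmax⟩ := (isCompact_outcomes M uS uR μ0 χ 0).exists_isMaxOn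
    ⟨(_, c, α, y), h⟩ (continuous_payoff uS).continuousOn
  exact ⟨_, _, _, _, hz, fun d' c' α' y' h' => hmax (a := (d', c', α', y')) h'⟩

lemma chiPBEPayoffs_nonempty (hμ0 : μ0 ∈ stdSimplex ℝ Θ) (hχ0 : 0 ≤ χ) (hχ1 : χ ≤ 1) :
    (chiPBEPayoffs A M uS uR μ0 χ).Nonempty := by
  obtain ⟨d, c, α, y, h, hmax⟩ := exists_outcome_payoff_max M uS uR hμ0.1 hχ0 hχ1
  refine ⟨_, h.mem_chiPBEPayoffs hμ0 fun ψ hψ => ?_⟩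
  obtain ⟨c', α', y', h'⟩ := (isSplit_messageMass (fun θ => mul_nonneg hχ0 (hμ0.1 θ))
    hψ).exists_outcome uS uR hμ0.1 hχ1
  exact ⟨_, h'.payoff_mem_continuationPayoffs hμ0, hmax _ _ _ _ h'⟩

omit [Nonempty A] in
lemma exists_outcome_of_mem_chiPBEPayoffs (hμ0 : μ0 ∈ stdSimplex ℝ Θ) (hχ0 : 0 ≤ χ) (hχ1 : χ ≤ 1)
    (hs : s ∈ chiPBEPayoffs A M uS uR μ0 χ) :
    ∃ (d c : M → Θ → ℝ) (α : M → A → ℝ) (y : ℝ), IsOutcome uS uR μ0 χ 0 d c α y ∧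
      payoff uS (d + c) α = s := by
  obtain ⟨ψ, hψ, hcont, -⟩ := mem_chiPBEPayoffs_iff.1 hs
  exact ⟨_, (mem_continuationPayoffs_iff hμ0 hχ0 hχ1 hψ).1 hcont⟩

omit [Nonempty A] in
lemma le_vHatG_of_mem_chiPBEPayoffs (hμ0 : μ0 ∈ stdSimplex ℝ Θ) (hχ0 : 0 ≤ χ) (hχ1 : χ ≤ 1)
    (hs : s ∈ chiPBEPayoffs A M uS uR μ0 χ) : s ≤ vHatG uS uR μ0 := by
  obtain ⟨d, c, α, y, h, rfl⟩ := exists_outcome_of_mem_chiPBEPayoffs hμ0 hχ0 hχ1 hs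
  exact h.payoff_le_vHatG hμ0

lemma IsOutcome.mem_chiPBEPayoffs_of_le (hμ0 : μ0 ∈ stdSimplex ℝ Θ) (hχ0 : 0 ≤ χ) (hχ1 : χ ≤ 1)
    (h : IsOutcome uS uR μ0 χ 0 d c α y) (hw : wHatG uS uR μ0 ≤ t)
    (ht : t ≤ payoff uS (d + c) α) : t ∈ chiPBEPayoffs A M uS uR μ0 χ := by
  obtain ⟨d', c', α', y', h', rfl⟩ :=
    h.exists_payoff_eq hμ0 hχ0 hχ1 ht ((wG_le_wHatG hμ0).trans hw)
  refine h'.mem_chiPBEPayoffs hμ0 fun ψ hψ => ?_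
  obtain ⟨c'', α'', y'', h'', hle⟩ := (isSplit_messageMass (fun θ => mul_nonneg hχ0 (hμ0.1 θ))
    hψ).exists_outcome_payoff_le_wHatG uS uR hμ0 hχ1
  exact ⟨_, h''.payoff_mem_continuationPayoffs hμ0, hle.trans hw⟩

lemma mem_chiPBEPayoffs_of_le (hμ0 : μ0 ∈ stdSimplex ℝ Θ) (hχ0 : 0 ≤ χ) (hχ1 : χ ≤ 1)
    (hs : s ∈ chiPBEPayoffs A M uS uR μ0 χ) (hw : wHatG uS uR μ0 ≤ t) (ht : t ≤ s) :
    t ∈ chiPBEPayoffs A M uS uR μ0 χ := by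
  obtain ⟨d, c, α, y, h, rfl⟩ := exists_outcome_of_mem_chiPBEPayoffs hμ0 hχ0 hχ1 hs
  exact h.mem_chiPBEPayoffs_of_le hμ0 hχ0 hχ1 hw ht

lemma wHatG_le_of_mem_chiPBEPayoffs_one (hμ0 : μ0 ∈ stdSimplex ℝ Θ)
    (hcard : Fintype.card Θ ≤ Fintype.card M) (hs : s ∈ chiPBEPayoffs A M uS uR μ0 1) :
    wHatG uS uR μ0 ≤ s := by
  obtain ⟨-, -, -, hdev⟩ := mem_chiPBEPayoffs_iff.1 hs
  refine wHatG_le hμ0 hcard fun b hb => ?_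
  obtain ⟨ψ, hψ, rfl⟩ := hb.exists_experiment
  obtain ⟨s', hs', hle⟩ := hdev ψ hψ
  obtain ⟨c, α, y, h, rfl⟩ := (mem_continuationPayoffs_iff hμ0 zero_le_one le_rfl hψ).1 hs'
  have hc : c = 0 := by
    have hsplit := h.influenced
    rw [sub_self, zero_smul] at hsplit
    exact hsplit.eq_zero
  have hlow := h.sum_mul_wG_le_payoff
  rw [hc, add_zero, one_smul] at hlow
  rw [hc, add_zero, one_smul] at hle
  exact hlow.trans hle

omit [Nonempty M] in
lemma exists_outcome_payoff_eq_splitValue_vG {b : M → Θ → ℝ} (hb : IsSplit μ0 b) :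
    ∃ α y, IsOutcome uS uR μ0 1 0 b 0 α y ∧
      payoff uS (b + 0) α = ∑ m, (∑ θ, b m θ) * vG uS uR (b m) := by
  classical
  choose a ha hval using fun m => exists_mem_BRf_eq_vG uS uR (b m)
  have hle (a : A) : uS a ≤ ‖uS‖ := (le_abs_self _).trans (norm_le_pi_norm uS a)
  refine ⟨fun m => Pi.single (a m) 1, ‖uS‖, ⟨by rwa [one_smul], ?_, fun m =>
    single_mem_stdSimplex ℝ _, fun m => ?_, fun m θ => ?_, fun m θ => ?_, (abs_norm _).le⟩, ?_⟩
  · rw [sub_self, zero_smul]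
    exact ⟨fun _ _ => le_rfl, fun _ => Finset.sum_const_zero⟩
  · rw [add_zero]
    refine (support_subset_BRf_iff (single_mem_stdSimplex ℝ _).1).1 fun a' ha' => ?_
    obtain rfl : a' = a m := by_contra fun hne => ha' (Pi.single_eq_of_ne hne _)
    exact ha m
  · rw [dotProduct_single_one]
    exact mul_le_mul_of_nonneg_left (hle _) (hb.nonneg m θ)
  · simp only [Pi.zero_apply, zero_mul]
  · simp only [payoff, add_zero, dotProduct_single_one, hval]

lemma exists_outcome_vHatG_le_payoff (hμ0 : μ0 ∈ stdSimplex ℝ Θ)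
    (hcard : Fintype.card Θ ≤ Fintype.card M) :
    ∃ (d c : M → Θ → ℝ) (α : M → A → ℝ) (y : ℝ), IsOutcome uS uR μ0 1 0 d c α y ∧
      vHatG uS uR μ0 ≤ payoff uS (d + c) α := by
  obtain ⟨d, c, α, y, h, hmax⟩ := exists_outcome_payoff_max M uS uR hμ0.1 zero_le_one le_rfl
  refine ⟨d, c, α, y, h, vHatG_le hμ0 hcard fun b hb => ?_⟩
  obtain ⟨α', y', h', hval⟩ := exists_outcome_payoff_eq_splitValue_vG (uS := uS) (uR := uR) hb
  exact hval ▸ hmax _ _ _ _ h'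

lemma chiPBEPayoffs_one (hμ0 : μ0 ∈ stdSimplex ℝ Θ) (hcard : Fintype.card Θ ≤ Fintype.card M) :
    chiPBEPayoffs A M uS uR μ0 1 = Set.Icc (wHatG uS uR μ0) (vHatG uS uR μ0) := by
  ext t
  refine ⟨fun ht => ⟨wHatG_le_of_mem_chiPBEPayoffs_one hμ0 hcard ht,
    le_vHatG_of_mem_chiPBEPayoffs hμ0 zero_le_one le_rfl ht⟩, fun ht => ?_⟩
  obtain ⟨d, c, α, y, h, hv⟩ :=
    exists_outcome_vHatG_le_payoff (M := M) (uS := uS) (uR := uR) hμ0 hcard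
  exact h.mem_chiPBEPayoffs_of_le hμ0 zero_le_one le_rfl ht.1 (ht.2.trans hv)

end PayoffSet

end PartialCredibility

open PartialCredibility in
theorem chiPBE_payoffs_below_Icc_general
    {A Θ M : Type*} [Fintype A] [Fintype Θ] [Fintype M] [Nonempty A] [Nonempty M]
    (uS : A → ℝ) (uR : A → Θ → ℝ) {μ0 : Θ → ℝ} (hμ0 : μ0 ∈ stdSimplex ℝ Θ) :
    (∀ χ : ℝ, 0 ≤ χ → χ ≤ 1 →
      (chiPBEPayoffs A M uS uR μ0 χ).Nonempty ∧
      ∀ s ∈ chiPBEPayoffs A M uS uR μ0 χ,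
        ∀ t ∈ Set.Icc (wHatG uS uR μ0) (vHatG uS uR μ0),
          min s t ∈ chiPBEPayoffs A M uS uR μ0 χ ∧
          max s t ∈ Set.Icc (wHatG uS uR μ0) (vHatG uS uR μ0)) ∧
    (Fintype.card Θ ≤ Fintype.card M →
      chiPBEPayoffs A M uS uR μ0 1 = Set.Icc (wHatG uS uR μ0) (vHatG uS uR μ0)) := by
  refine ⟨fun χ hχ0 hχ1 => ⟨chiPBEPayoffs_nonempty hμ0 hχ0 hχ1, fun s hs t ht => ⟨?_, ?_⟩⟩,
    chiPBEPayoffs_one hμ0⟩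
  · rcases le_total s t with hst | hts
    · rwa [min_eq_left hst]
    · rw [min_eq_right hts]
      exact mem_chiPBEPayoffs_of_le hμ0 hχ0 hχ1 hs ht.1 hts
  · exact ⟨ht.1.trans (le_max_right s t),
      max_le (le_vHatG_of_mem_chiPBEPayoffs hμ0 hχ0 hχ1 hs) ht.2⟩

/-- **Payoff set under partial credibility.** For every credibility `χ ∈ [0,1]`, the set
of sender `χ`-PBE payoffs is nonempty and lies weakly below `[ŵ(μ0), v̂(μ0)]` in the
strong set order; for `χ = 1`, it equals `[ŵ(μ0), v̂(μ0)]`. -/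
theorem chiPBE_payoffs_below_Icc
    (A Θ M : Type) [Fintype A] [Fintype Θ] [Fintype M]
    [Nonempty A] [Nonempty Θ] [Nonempty M]
    (hM : 2 * Fintype.card Θ ≤ Fintype.card M)
    (uS : A → ℝ) (uR : A → Θ → ℝ) (μ0 : Θ → ℝ) (hμ0 : μ0 ∈ stdSimplex ℝ Θ) :
    (∀ χ : ℝ, 0 ≤ χ → χ ≤ 1 →
      (chiPBEPayoffs A M uS uR μ0 χ).Nonempty ∧
      ∀ s ∈ chiPBEPayoffs A M uS uR μ0 χ,
        ∀ t ∈ Set.Icc (wHatG uS uR μ0) (vHatG uS uR μ0),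
          min s t ∈ chiPBEPayoffs A M uS uR μ0 χ ∧
          max s t ∈ Set.Icc (wHatG uS uR μ0) (vHatG uS uR μ0)) ∧
    chiPBEPayoffs A M uS uR μ0 1 = Set.Icc (wHatG uS uR μ0) (vHatG uS uR μ0) :=
  let ⟨hχ, h1⟩ := chiPBE_payoffs_below_Icc_general uS uR hμ0
  ⟨hχ, h1 (by omega)⟩
end
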